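/- arXiv:1601.07979 — 5 statements merged into one kernel-verified Lean document; each statement's English description precedes it below -/
import Mathlib

section
/- Let (H, A, Φ) be a Hom-entwining structure over a field k (A a Hom-algebra, H a Hom-coalgebra) and let n ∈ ℤ. Then H⊗A, with structure map α_H⊗α_A, right A-action (h⊗a)·x = α_H(h) ⊗ a α_A^{-1}(x), and right H-coaction ρ(h⊗a) = Σ (h₁ ⊗ α_A^{n+1}((α_A^{-n}(a))_Φ)) ⊗ (h₂)^Φ (where Φ is applied to h₂ ⊗ α_A^{-n}(a)), is an n-th Hom-entwined module. -/
open TensorProduct BigOperators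

noncomputable section

variable (k : Type*) [Field k]

section HomDefs

variable {A B C H U X Y Z : Type*}
variable [AddCommGroup A] [Module k A] [AddCommGroup B] [Module k B]
variable [AddCommGroup C] [Module k C] [AddCommGroup H] [Module k H]
variable [AddCommGroup U] [Module k U] [AddCommGroup X] [Module k X]
variable [AddCommGroup Y] [Module k Y] [AddCommGroup Z] [Module k Z]

/-- A Hom-algebra `(A, α, μ, e)` over `k`. -/
def IsHomAlgebra (α : A ≃ₗ[k] A) (μ : A →ₗ[k] A →ₗ[k] A) (e : A) : Prop :=
  (∀ a b, α (μ a b) = μ (α a) (α b)) ∧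
  (∀ a b c, μ (α a) (μ b c) = μ (μ a b) (α c)) ∧
  α e = e ∧ (∀ a, μ e a = α a) ∧ (∀ a, μ a e = α a)

/-- A Hom-coalgebra `(C, α, Δ, ε)` over `k`. -/
def IsHomCoalgebra (α : C ≃ₗ[k] C) (Δ : C →ₗ[k] C ⊗[k] C) (ε : C →ₗ[k] k) : Prop :=
  (∀ c, Δ (α c) = TensorProduct.map α.toLinearMap α.toLinearMap (Δ c)) ∧
  (∀ c, ε (α c) = ε c) ∧
  (∀ c, TensorProduct.map α.toLinearMap Δ (Δ c)
      = TensorProduct.assoc k C C C (TensorProduct.map Δ α.toLinearMap (Δ c))) ∧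
  (∀ c, TensorProduct.lid k C (TensorProduct.map ε (LinearMap.id : C →ₗ[k] C) (Δ c)) = α c) ∧
  (∀ c, TensorProduct.rid k C (TensorProduct.map (LinearMap.id : C →ₗ[k] C) ε (Δ c)) = α c)

/-- A Hom-bialgebra `(H, α, μ, e, Δ, ε)` over `k`. -/
def IsHomBialgebra (α : H ≃ₗ[k] H) (μ : H →ₗ[k] H →ₗ[k] H) (e : H)
    (Δ : H →ₗ[k] H ⊗[k] H) (ε : H →ₗ[k] k) : Prop :=
  IsHomAlgebra k α μ e ∧ IsHomCoalgebra k α Δ ε ∧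
  (∀ a b, Δ (μ a b) = TensorProduct.map (TensorProduct.lift μ) (TensorProduct.lift μ)
      (TensorProduct.tensorTensorTensorComm k H H H H (Δ a ⊗ₜ[k] Δ b))) ∧
  Δ e = e ⊗ₜ[k] e ∧
  (∀ a b, ε (μ a b) = ε a * ε b) ∧
  ε e = 1

/-- A right `A`-Hom-module `(U, αU, act)`. -/
def IsHomModule (αA : A ≃ₗ[k] A) (μ : A →ₗ[k] A →ₗ[k] A) (e : A)
    (αU : U ≃ₗ[k] U) (act : U →ₗ[k] A →ₗ[k] U) : Prop :=
  (∀ u a, αU (act u a) = act (αU u) (αA a)) ∧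
  (∀ u, act u e = αU u) ∧
  (∀ u a b, act (act u a) (αA b) = act (αU u) (μ a b))

/-- A right `H`-Hom-comodule `(U, αU, ρ)`. -/
def IsHomComodule (αH : H ≃ₗ[k] H) (Δ : H →ₗ[k] H ⊗[k] H) (ε : H →ₗ[k] k)
    (αU : U ≃ₗ[k] U) (ρ : U →ₗ[k] U ⊗[k] H) : Prop :=
  (∀ u, ρ (αU u) = TensorProduct.map αU.toLinearMap αH.toLinearMap (ρ u)) ∧
  (∀ u, TensorProduct.map αU.toLinearMap Δ (ρ u)
      = TensorProduct.assoc k U H H (TensorProduct.map ρ αH.toLinearMap (ρ u))) ∧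
  (∀ u, TensorProduct.rid k U (TensorProduct.map (LinearMap.id : U →ₗ[k] U) ε (ρ u)) = αU u)

/-- A Hom-cotwistor `φ : B ⊗ H → H ⊗ B` between Hom-coalgebras `B` and `H`
(conditions (M1)-(M4) together with compatibility with the structure maps). -/
def IsHomCotwistor (αB : B ≃ₗ[k] B) (ΔB : B →ₗ[k] B ⊗[k] B) (εB : B →ₗ[k] k)
    (αH : H ≃ₗ[k] H) (ΔH : H →ₗ[k] H ⊗[k] H) (εH : H →ₗ[k] k)
    (φ : B ⊗[k] H →ₗ[k] H ⊗[k] B) : Prop :=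
  (φ ∘ₗ TensorProduct.map αB.toLinearMap αH.toLinearMap
     = TensorProduct.map αH.toLinearMap αB.toLinearMap ∘ₗ φ) ∧
  -- (M1)
  (TensorProduct.map αH.toLinearMap ΔB ∘ₗ φ
     = (TensorProduct.assoc k H B B).toLinearMap
       ∘ₗ TensorProduct.map φ (LinearMap.id : B →ₗ[k] B)
       ∘ₗ (TensorProduct.assoc k B H B).symm.toLinearMap
       ∘ₗ TensorProduct.map (LinearMap.id : B →ₗ[k] B) φ
       ∘ₗ (TensorProduct.assoc k B B H).toLinearMap
       ∘ₗ TensorProduct.map ΔB αH.toLinearMap) ∧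
  -- (M2)
  (TensorProduct.map ΔH αB.toLinearMap ∘ₗ φ
     = (TensorProduct.assoc k H H B).symm.toLinearMap
       ∘ₗ TensorProduct.map (LinearMap.id : H →ₗ[k] H) φ
       ∘ₗ (TensorProduct.assoc k H B H).toLinearMap
       ∘ₗ TensorProduct.map φ (LinearMap.id : H →ₗ[k] H)
       ∘ₗ (TensorProduct.assoc k B H H).symm.toLinearMap
       ∘ₗ TensorProduct.map αB.toLinearMap ΔH) ∧
  -- (M3)
  ((TensorProduct.lid k B).toLinearMap
      ∘ₗ TensorProduct.map εH (LinearMap.id : B →ₗ[k] B) ∘ₗ φ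
     = (TensorProduct.rid k B).toLinearMap
        ∘ₗ TensorProduct.map (LinearMap.id : B →ₗ[k] B) εH) ∧
  -- (M4)
  ((TensorProduct.rid k H).toLinearMap
      ∘ₗ TensorProduct.map (LinearMap.id : H →ₗ[k] H) εB ∘ₗ φ
     = (TensorProduct.lid k H).toLinearMap
        ∘ₗ TensorProduct.map εB (LinearMap.id : H →ₗ[k] H))

/-- A monoidal Hom-cotwistor between Hom-bialgebras `B` and `H`:
a Hom-cotwistor additionally satisfying (M5) and (M6). -/
def IsMonoidalHomCotwistor (αB : B ≃ₗ[k] B) (μB : B →ₗ[k] B →ₗ[k] B) (eB : B)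
    (ΔB : B →ₗ[k] B ⊗[k] B) (εB : B →ₗ[k] k)
    (αH : H ≃ₗ[k] H) (μH : H →ₗ[k] H →ₗ[k] H) (eH : H)
    (ΔH : H →ₗ[k] H ⊗[k] H) (εH : H →ₗ[k] k)
    (φ : B ⊗[k] H →ₗ[k] H ⊗[k] B) : Prop :=
  IsHomCotwistor k αB ΔB εB αH ΔH εH φ ∧
  -- (M5)
  (TensorProduct.map (TensorProduct.lift μH) (TensorProduct.lift μB)
      ∘ₗ (TensorProduct.tensorTensorTensorComm k H B H B).toLinearMap
      ∘ₗ TensorProduct.map φ φ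
    = φ ∘ₗ TensorProduct.map (TensorProduct.lift μB) (TensorProduct.lift μH)
        ∘ₗ (TensorProduct.tensorTensorTensorComm k B H B H).toLinearMap) ∧
  -- (M6)
  φ (eB ⊗ₜ[k] eH) = eH ⊗ₜ[k] eB

/-- A Hom-entwining map `Φ : H ⊗ A → A ⊗ H` (conditions (E1)-(E4) together
with compatibility with the structure maps); `(H, A, Φ)` is then a
Hom-entwining structure. -/
def IsHomEntwining (αA : A ≃ₗ[k] A) (μ : A →ₗ[k] A →ₗ[k] A) (e : A)
    (αH : H ≃ₗ[k] H) (Δ : H →ₗ[k] H ⊗[k] H) (ε : H →ₗ[k] k)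
    (Φ : H ⊗[k] A →ₗ[k] A ⊗[k] H) : Prop :=
  (TensorProduct.map αA.toLinearMap αH.toLinearMap ∘ₗ Φ
     = Φ ∘ₗ TensorProduct.map αH.toLinearMap αA.toLinearMap) ∧
  -- (E1)
  (TensorProduct.map (TensorProduct.lift μ) αH.toLinearMap
      ∘ₗ (TensorProduct.assoc k A A H).symm.toLinearMap
      ∘ₗ TensorProduct.map (LinearMap.id : A →ₗ[k] A) Φ
      ∘ₗ (TensorProduct.assoc k A H A).toLinearMap
      ∘ₗ TensorProduct.map Φ (LinearMap.id : A →ₗ[k] A)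
    = Φ ∘ₗ TensorProduct.map αH.toLinearMap (TensorProduct.lift μ)
        ∘ₗ (TensorProduct.assoc k H A A).toLinearMap) ∧
  -- (E2)
  (TensorProduct.map αA.toLinearMap Δ ∘ₗ Φ
     = (TensorProduct.assoc k A H H).toLinearMap
       ∘ₗ TensorProduct.map Φ (LinearMap.id : H →ₗ[k] H)
       ∘ₗ (TensorProduct.assoc k H A H).symm.toLinearMap
       ∘ₗ TensorProduct.map (LinearMap.id : H →ₗ[k] H) Φ
       ∘ₗ (TensorProduct.assoc k H H A).toLinearMap
       ∘ₗ TensorProduct.map Δ αA.toLinearMap) ∧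
  -- (E3)
  ((TensorProduct.rid k A).toLinearMap
      ∘ₗ TensorProduct.map (LinearMap.id : A →ₗ[k] A) ε ∘ₗ Φ
     = (TensorProduct.lid k A).toLinearMap
        ∘ₗ TensorProduct.map ε (LinearMap.id : A →ₗ[k] A)) ∧
  -- (E4)
  (∀ h, Φ (h ⊗ₜ[k] e) = e ⊗ₜ[k] h)

/-- A Hom-monoidal entwining datum between Hom-bialgebras `H` (coalgebra side)
and `A` (algebra side): a Hom-entwining map additionally satisfying (E5), (E6). -/
def IsHomMonoidalEntwining (αA : A ≃ₗ[k] A) (μA : A →ₗ[k] A →ₗ[k] A) (eA : A)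
    (ΔA : A →ₗ[k] A ⊗[k] A) (εA : A →ₗ[k] k)
    (αH : H ≃ₗ[k] H) (μH : H →ₗ[k] H →ₗ[k] H) (eH : H)
    (ΔH : H →ₗ[k] H ⊗[k] H) (εH : H →ₗ[k] k)
    (Φ : H ⊗[k] A →ₗ[k] A ⊗[k] H) : Prop :=
  IsHomEntwining k αA μA eA αH ΔH εH Φ ∧
  -- (E5)
  (TensorProduct.map (LinearMap.id : A ⊗[k] A →ₗ[k] A ⊗[k] A) (TensorProduct.lift μH)
      ∘ₗ (TensorProduct.tensorTensorTensorComm k A H A H).toLinearMap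
      ∘ₗ TensorProduct.map Φ Φ
      ∘ₗ (TensorProduct.tensorTensorTensorComm k H H A A).toLinearMap
      ∘ₗ TensorProduct.map
           (TensorProduct.map (αH.toLinearMap ∘ₗ αH.toLinearMap)
             (αH.toLinearMap ∘ₗ αH.toLinearMap)) ΔA
    = TensorProduct.map ΔA (αH.toLinearMap ∘ₗ αH.toLinearMap)
        ∘ₗ Φ ∘ₗ TensorProduct.map (TensorProduct.lift μH) (LinearMap.id : A →ₗ[k] A)) ∧
  -- (E6)
  (∀ a, TensorProduct.lid k H
      (TensorProduct.map εA (LinearMap.id : H →ₗ[k] H) (Φ (eH ⊗ₜ[k] a))) = εA a • eH)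

/-- An `n`-th Hom-entwined module over a Hom-entwining structure `(H, A, Φ)`. -/
def IsHomEntwinedModule (αA : A ≃ₗ[k] A) (μ : A →ₗ[k] A →ₗ[k] A) (e : A)
    (αH : H ≃ₗ[k] H) (Δ : H →ₗ[k] H ⊗[k] H) (ε : H →ₗ[k] k)
    (Φ : H ⊗[k] A →ₗ[k] A ⊗[k] H) (n : ℤ)
    (αU : U ≃ₗ[k] U) (act : U →ₗ[k] A →ₗ[k] U) (ρ : U →ₗ[k] U ⊗[k] H) : Prop :=
  IsHomModule k αA μ e αU act ∧
  IsHomComodule k αH Δ ε αU ρ ∧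
  ∀ u a, ρ (act u a)
    = TensorProduct.map
        (TensorProduct.lift act ∘ₗ
          TensorProduct.map (LinearMap.id : U →ₗ[k] U) αA.toLinearMap)
        ((αH ^ (-n)).toLinearMap)
        ((TensorProduct.assoc k U A H).symm
          (TensorProduct.map (LinearMap.id : U →ₗ[k] U)
            (Φ ∘ₗ TensorProduct.map ((αH ^ (n + 1)).toLinearMap)
               (LinearMap.id : A →ₗ[k] A))
            (TensorProduct.assoc k U H A (ρ u ⊗ₜ[k] a))))

/-- A Hom-Long dimodule over a Hom-bialgebra `H`. -/
def IsHomLongDimodule (αH : H ≃ₗ[k] H) (μ : H →ₗ[k] H →ₗ[k] H) (e : H)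
    (Δ : H →ₗ[k] H ⊗[k] H) (ε : H →ₗ[k] k)
    (αU : U ≃ₗ[k] U) (act : U →ₗ[k] H →ₗ[k] U) (ρ : U →ₗ[k] U ⊗[k] H) : Prop :=
  IsHomModule k αH μ e αU act ∧
  IsHomComodule k αH Δ ε αU ρ ∧
  ∀ u h, ρ (act u h)
    = TensorProduct.map (TensorProduct.lift act) αH.toLinearMap
        ((TensorProduct.assoc k U H H).symm
          (TensorProduct.map (LinearMap.id : U →ₗ[k] U)
            (TensorProduct.comm k H H).toLinearMap
            (TensorProduct.assoc k U H H (ρ u ⊗ₜ[k] αH h))))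

/-- A right `H`-comodule algebra over a Hom-bialgebra `H`. -/
def IsHomComoduleAlgebra (αH : H ≃ₗ[k] H) (μH : H →ₗ[k] H →ₗ[k] H) (eH : H)
    (ΔH : H →ₗ[k] H ⊗[k] H) (εH : H →ₗ[k] k)
    (αA : A ≃ₗ[k] A) (μA : A →ₗ[k] A →ₗ[k] A) (eA : A)
    (ρA : A →ₗ[k] A ⊗[k] H) : Prop :=
  IsHomAlgebra k αA μA eA ∧
  IsHomComodule k αH ΔH εH αA ρA ∧
  (∀ a b, ρA (μA a b) = TensorProduct.map (TensorProduct.lift μA) (TensorProduct.lift μH)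
      (TensorProduct.tensorTensorTensorComm k A H A H (ρA a ⊗ₜ[k] ρA b))) ∧
  ρA eA = eA ⊗ₜ[k] eH

/-- A right `H`-module coalgebra over a Hom-bialgebra `H`. -/
def IsHomModuleCoalgebra (αH : H ≃ₗ[k] H) (μH : H →ₗ[k] H →ₗ[k] H) (eH : H)
    (ΔH : H →ₗ[k] H ⊗[k] H) (εH : H →ₗ[k] k)
    (αC : C ≃ₗ[k] C) (ΔC : C →ₗ[k] C ⊗[k] C) (εC : C →ₗ[k] k)
    (act : C →ₗ[k] H →ₗ[k] C) : Prop :=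
  IsHomCoalgebra k αC ΔC εC ∧
  IsHomModule k αH μH eH αC act ∧
  (∀ c h, ΔC (act c h) = TensorProduct.map (TensorProduct.lift act) (TensorProduct.lift act)
      (TensorProduct.tensorTensorTensorComm k C C H H (ΔC c ⊗ₜ[k] ΔH h))) ∧
  (∀ c h, εC (act c h) = εC c * εH h)

/-- A Hom-Hopf algebra `(H, α, μ, e, Δ, ε, S)` over `k`. -/
def IsHomHopf (αH : H ≃ₗ[k] H) (μ : H →ₗ[k] H →ₗ[k] H) (e : H)
    (Δ : H →ₗ[k] H ⊗[k] H) (ε : H →ₗ[k] k) (S : H →ₗ[k] H) : Prop :=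
  IsHomBialgebra k αH μ e Δ ε ∧
  (∀ h, S (αH h) = αH (S h)) ∧
  (∀ h, TensorProduct.lift μ
      (TensorProduct.map S (LinearMap.id : H →ₗ[k] H) (Δ h)) = ε h • e) ∧
  (∀ h, TensorProduct.lift μ
      (TensorProduct.map (LinearMap.id : H →ₗ[k] H) S (Δ h)) = ε h • e)

/-- A `p`-th right-right Yetter-Drinfeld module over a Hom-Hopf algebra `H`. -/
def IsYetterDrinfeld (αH : H ≃ₗ[k] H) (μ : H →ₗ[k] H →ₗ[k] H) (e : H)
    (Δ : H →ₗ[k] H ⊗[k] H) (ε : H →ₗ[k] k) (S : H →ₗ[k] H) (p : ℤ)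
    (αU : U ≃ₗ[k] U) (act : U →ₗ[k] H →ₗ[k] U) (ρ : U →ₗ[k] U ⊗[k] H) : Prop :=
  IsHomModule k αH μ e αU act ∧
  IsHomComodule k αH Δ ε αU ρ ∧
  ∀ u h, ρ (act u h)
    = TensorProduct.map
        (TensorProduct.lift act ∘ₗ
          TensorProduct.map (LinearMap.id : U →ₗ[k] U) αH.symm.toLinearMap)
        (TensorProduct.lift μ ∘ₗ
          TensorProduct.map (S ∘ₗ (αH ^ (p - 2)).toLinearMap)
            (TensorProduct.lift μ ∘ₗ
              TensorProduct.map αH.symm.toLinearMap ((αH ^ (p - 4)).toLinearMap)))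
        (TensorProduct.tensorTensorTensorComm k U H H (H ⊗[k] H)
          (TensorProduct.map (LinearMap.id : U ⊗[k] H →ₗ[k] U ⊗[k] H)
            (TensorProduct.leftComm k H H H).toLinearMap
            (TensorProduct.tensorTensorTensorComm k U H H (H ⊗[k] H)
              (ρ u ⊗ₜ[k]
                TensorProduct.map (LinearMap.id : H →ₗ[k] H) Δ (Δ h)))))

/-- The smash coproduct comultiplication on `B ⊗ H` induced by
`φ : B ⊗ H → H ⊗ B`: `Δ(b ⊗ h) = (b₁ ⊗ (h₁)^φ) ⊗ ((b₂)^φ ⊗ h₂)`. -/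
def smashComul (φ : B ⊗[k] H →ₗ[k] H ⊗[k] B) (ΔB : B →ₗ[k] B ⊗[k] B)
    (ΔH : H →ₗ[k] H ⊗[k] H) : B ⊗[k] H →ₗ[k] (B ⊗[k] H) ⊗[k] (B ⊗[k] H) :=
  (TensorProduct.assoc k B H (B ⊗[k] H)).symm.toLinearMap
  ∘ₗ TensorProduct.map (LinearMap.id : B →ₗ[k] B)
       (TensorProduct.assoc k H B H).toLinearMap
  ∘ₗ TensorProduct.map (LinearMap.id : B →ₗ[k] B)
       (TensorProduct.map φ (LinearMap.id : H →ₗ[k] H))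
  ∘ₗ TensorProduct.map (LinearMap.id : B →ₗ[k] B)
       (TensorProduct.assoc k B H H).symm.toLinearMap
  ∘ₗ (TensorProduct.assoc k B B (H ⊗[k] H)).toLinearMap
  ∘ₗ TensorProduct.map ΔB ΔH

/-- The smash coproduct counit on `B ⊗ H`: `ε(b ⊗ h) = εB(b) εH(h)`. -/
def smashCounit (εB : B →ₗ[k] k) (εH : H →ₗ[k] k) : B ⊗[k] H →ₗ[k] k :=
  (TensorProduct.lid k k).toLinearMap ∘ₗ TensorProduct.map εB εH

/-- The componentwise product on `B ⊗ H`: `(a ⊗ h)(b ⊗ g) = ab ⊗ hg`. -/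
def smashMul (μB : B →ₗ[k] B →ₗ[k] B) (μH : H →ₗ[k] H →ₗ[k] H) :
    B ⊗[k] H →ₗ[k] B ⊗[k] H →ₗ[k] B ⊗[k] H :=
  (TensorProduct.mk k (B ⊗[k] H) (B ⊗[k] H)).compr₂
    (TensorProduct.map (TensorProduct.lift μB) (TensorProduct.lift μH)
      ∘ₗ (TensorProduct.tensorTensorTensorComm k B H B H).toLinearMap)

/-- Threefold "componentwise comultiplication" `(C⊗C)⊗C → ((C⊗C)⊗C) ⊗ ((C⊗C)⊗C)`
obtained by applying `Δ2` to each factor and pairing the first and second legs. -/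
def convDelta3 (Δ2 : C →ₗ[k] C ⊗[k] C) :
    (C ⊗[k] C) ⊗[k] C →ₗ[k] ((C ⊗[k] C) ⊗[k] C) ⊗[k] ((C ⊗[k] C) ⊗[k] C) :=
  (TensorProduct.tensorTensorTensorComm k (C ⊗[k] C) (C ⊗[k] C) C C).toLinearMap
  ∘ₗ TensorProduct.map (TensorProduct.tensorTensorTensorComm k C C C C).toLinearMap
       (LinearMap.id : C ⊗[k] C →ₗ[k] C ⊗[k] C)
  ∘ₗ TensorProduct.map (TensorProduct.map Δ2 Δ2) Δ2

/-- The map `ξ_{X,Y}(x ⊗ y) = α_X⁻¹(x)·α_H^m(y₍₁₎) ⊗ α_Y⁻¹(y₍₀₎)` for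
Hom-Long dimodules `X`, `Y`. -/
def longXi (m : ℤ) (αH : H ≃ₗ[k] H) (αX : X ≃ₗ[k] X) (αY : Y ≃ₗ[k] Y)
    (act : X →ₗ[k] H →ₗ[k] X) (ρ : Y →ₗ[k] Y ⊗[k] H) : X ⊗[k] Y →ₗ[k] X ⊗[k] Y :=
  TensorProduct.map
      (TensorProduct.lift act ∘ₗ
        TensorProduct.map (LinearMap.id : X →ₗ[k] X) ((αH ^ m).toLinearMap))
      αY.symm.toLinearMap
    ∘ₗ (TensorProduct.assoc k X H Y).symm.toLinearMap
    ∘ₗ TensorProduct.map (LinearMap.id : X →ₗ[k] X) (TensorProduct.comm k Y H).toLinearMap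
    ∘ₗ TensorProduct.map αX.symm.toLinearMap ρ

/-- The associativity constraint `a_{X,Y,Z}((x⊗y)⊗z) = α_X^{i+1}(x) ⊗ (y ⊗ α_Z^{-j-1}(z))`. -/
def homAssoc (i j : ℤ) (αX : X ≃ₗ[k] X) (αZ : Z ≃ₗ[k] Z) :
    (X ⊗[k] Y) ⊗[k] Z ≃ₗ[k] X ⊗[k] (Y ⊗[k] Z) :=
  (TensorProduct.assoc k X Y Z).trans
    (TensorProduct.congr (αX ^ (i + 1))
      (TensorProduct.congr (LinearEquiv.refl k Y) (αZ ^ (-j - 1))))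

/-- The braiding `τ_{X,Y}(x ⊗ y) = α_Y^{j-i-1}(y₍₀₎) ⊗ α_X^{i-j-1}(x)·α_H^{-p}(y₍₁₎)`
for Yetter-Drinfeld modules. -/
def ydTau (p i j : ℤ) (αH : H ≃ₗ[k] H) (αX : X ≃ₗ[k] X) (αY : Y ≃ₗ[k] Y)
    (act : X →ₗ[k] H →ₗ[k] X) (ρ : Y →ₗ[k] Y ⊗[k] H) : X ⊗[k] Y →ₗ[k] Y ⊗[k] X :=
  TensorProduct.map ((αY ^ (j - i - 1)).toLinearMap)
      (TensorProduct.lift act ∘ₗ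
        TensorProduct.map ((αX ^ (i - j - 1)).toLinearMap) ((αH ^ (-p)).toLinearMap))
    ∘ₗ (TensorProduct.leftComm k X Y H).toLinearMap
    ∘ₗ TensorProduct.map (LinearMap.id : X →ₗ[k] X) ρ

end HomDefs

theorem aux_zpow_mul {A : Type*} [AddCommGroup A] [Module k A]
    (αA : A ≃ₗ[k] A) (μ : A →ₗ[k] A →ₗ[k] A)
    (h : ∀ a b, αA (μ a b) = μ (αA a) (αA b)) (m : ℤ) :
    ∀ a b, (αA ^ m) (μ a b) = μ ((αA ^ m) a) ((αA ^ m) b) := by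
  have hs : ∀ a b, αA⁻¹ (μ a b) = μ (αA⁻¹ a) (αA⁻¹ b) := by
    intro a b
    apply αA.injective
    rw [h]
    simp only [← LinearEquiv.mul_apply, mul_inv_cancel, LinearEquiv.coe_one, id]
  induction m with
  | zero => intro a b; simp
  | succ i ih => intro a b; simp only [zpow_add_one, LinearEquiv.mul_apply, h, ih]
  | pred i ih => intro a b; simp only [zpow_sub_one, LinearEquiv.mul_apply, hs, ih]

theorem aux_zpow_ent {A H : Type*} [AddCommGroup A] [Module k A] [AddCommGroup H] [Module k H]
    (αA : A ≃ₗ[k] A) (αH : H ≃ₗ[k] H) (Φ : H ⊗[k] A →ₗ[k] A ⊗[k] H)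
    (h : ∀ x, TensorProduct.congr αA αH (Φ x) = Φ (TensorProduct.congr αH αA x)) (m : ℤ) :
    ∀ x, TensorProduct.congr (αA ^ m) (αH ^ m) (Φ x)
      = Φ (TensorProduct.congr (αH ^ m) (αA ^ m) x) := by
  have key : ∀ {X Y : Type _} [AddCommGroup X] [Module k X] [AddCommGroup Y] [Module k Y]
      (f g : X ≃ₗ[k] X) (f' g' : Y ≃ₗ[k] Y) (x : X ⊗[k] Y),
      TensorProduct.congr (f * g) (f' * g') x
        = TensorProduct.congr f f' (TensorProduct.congr g g' x) := by
    intro X Y _ _ _ _ f g f' g' x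
    induction x using TensorProduct.induction_on with
    | zero => simp
    | tmul x y => simp
    | add x y hx hy => simp only [map_add, hx, hy]
  have one : ∀ {X Y : Type _} [AddCommGroup X] [Module k X] [AddCommGroup Y] [Module k Y]
      (x : X ⊗[k] Y), TensorProduct.congr (1 : X ≃ₗ[k] X) (1 : Y ≃ₗ[k] Y) x = x := by
    intro X Y _ _ _ _ x
    induction x using TensorProduct.induction_on with
    | zero => simp
    | tmul x y => simp
    | add x y hx hy => simp only [map_add, hx, hy]
  have key' : ∀ (f g : H ≃ₗ[k] H) (f' g' : A ≃ₗ[k] A) (x : H ⊗[k] A),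
      TensorProduct.congr (f * g) (f' * g') x
        = TensorProduct.congr f f' (TensorProduct.congr g g' x) := by
    intro f g f' g' x
    induction x using TensorProduct.induction_on with
    | zero => simp
    | tmul x y => simp
    | add x y hx hy => simp only [map_add, hx, hy]
  have one' : ∀ (x : H ⊗[k] A), TensorProduct.congr (1 : H ≃ₗ[k] H) (1 : A ≃ₗ[k] A) x = x := by
    intro x
    induction x using TensorProduct.induction_on with
    | zero => simp
    | tmul x y => simp
    | add x y hx hy => simp only [map_add, hx, hy]
  have hs : ∀ x, TensorProduct.congr αA⁻¹ αH⁻¹ (Φ x) = Φ (TensorProduct.congr αH⁻¹ αA⁻¹ x) := by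
    intro x
    apply (TensorProduct.congr αA αH).injective
    rw [h, ← key, ← key', mul_inv_cancel, mul_inv_cancel, one, one']
  induction m with
  | zero => intro x; simp only [zpow_zero, one, one']
  | succ i ih => intro x; simp only [zpow_add_one, key, key', h, ih]
  | pred i ih => intro x; simp only [zpow_sub_one, key, key', hs, ih]

theorem aux_main {A H : Type*} [AddCommGroup A] [Module k A] [AddCommGroup H] [Module k H]
    (αA : A ≃ₗ[k] A) (μ : A →ₗ[k] A →ₗ[k] A) (e : A)
    (αH : H ≃ₗ[k] H) (Δ : H →ₗ[k] H ⊗[k] H) (ε : H →ₗ[k] k)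
    (hA : IsHomAlgebra k αA μ e) (hH : IsHomCoalgebra k αH Δ ε)
    (Φ : H ⊗[k] A →ₗ[k] A ⊗[k] H)
    (hΦ : IsHomEntwining k αA μ e αH Δ ε Φ) (n : ℤ) (p q : A ≃ₗ[k] A) (r s : H ≃ₗ[k] H)
    (hr : αH ^ (-n) = r) (hs : αH ^ (n + 1) = s)
    (hpq : ∀ a, p (q a) = αA a) (hqp : ∀ a, q (p a) = αA a)
    (hpα : ∀ a, p (αA a) = αA (p a)) (hqα : ∀ a, q (αA a) = αA (q a))
    (hrs : ∀ a, r (s a) = αH a)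
    (hpμ : ∀ a b, p (μ a b) = μ (p a) (p b)) (hqμ : ∀ a b, q (μ a b) = μ (q a) (q b))
    (hpΦ : ∀ h a, TensorProduct.map p.toLinearMap s.toLinearMap (Φ (h ⊗ₜ a))
      = Φ (s h ⊗ₜ p a)) :
    IsHomEntwinedModule k αA μ e αH Δ ε Φ n
      (TensorProduct.congr αH αA)
      ((TensorProduct.mk k (H ⊗[k] A) A).compr₂
        (TensorProduct.map αH.toLinearMap
            (TensorProduct.lift μ ∘ₗ
              TensorProduct.map (LinearMap.id : A →ₗ[k] A) αA.symm.toLinearMap)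
          ∘ₗ (TensorProduct.assoc k H A A).toLinearMap))
      ((TensorProduct.assoc k H A H).symm.toLinearMap
        ∘ₗ TensorProduct.map (LinearMap.id : H →ₗ[k] H)
            (TensorProduct.map p.toLinearMap (LinearMap.id : H →ₗ[k] H)
              ∘ₗ Φ ∘ₗ TensorProduct.map (LinearMap.id : H →ₗ[k] H)
                  q.toLinearMap)
        ∘ₗ (TensorProduct.assoc k H H A).toLinearMap
        ∘ₗ TensorProduct.map Δ (LinearMap.id : A →ₗ[k] A)) := by
  obtain ⟨hA1, hA2, hA3, hA4, hA5⟩ := hA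
  obtain ⟨hH1, hH2, hH3, hH4, hH5⟩ := hH
  obtain ⟨h0, hE1, hE2, hE3, hE4⟩ := hΦ
  have h0' : ∀ h a, Φ (αH h ⊗ₜ αA a)
      = TensorProduct.map αA.toLinearMap αH.toLinearMap (Φ (h ⊗ₜ a)) := by
    intro h a
    simpa using (LinearMap.congr_fun h0 (h ⊗ₜ a)).symm
  have hsym : ∀ a b, αA.symm (μ a b) = μ (αA.symm a) (αA.symm b) := by
    intro a b
    apply αA.injective
    simp [hA1]
  refine ⟨⟨?_, ?_, ?_⟩, ⟨?_, ?_, ?_⟩, ?_⟩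
  · intro u a
    induction u using TensorProduct.induction_on with
    | zero => simp
    | tmul h b => simp [hA1]
    | add x y hx hy => simp only [map_add, LinearMap.add_apply, hx, hy]
  · intro u
    have he : αA.symm e = e := by rw [LinearEquiv.symm_apply_eq, hA3]
    induction u using TensorProduct.induction_on with
    | zero => simp
    | tmul h b => simp [he, hA5]
    | add x y hx hy => simp only [map_add, LinearMap.add_apply, hx, hy]
  · intro u a b
    induction u using TensorProduct.induction_on with
    | zero => simp
    | tmul h c =>
      have := hA2 c (αA.symm a) (αA.symm b)
      simp only [LinearEquiv.apply_symm_apply] at this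
      simp [hsym, this]
    | add x y hx hy => simp only [map_add, LinearMap.add_apply, hx, hy]
  · intro u
    induction u using TensorProduct.induction_on with
    | zero => simp
    | tmul h a =>
      simp only [LinearMap.comp_apply, LinearEquiv.coe_coe, TensorProduct.congr_tmul,
        TensorProduct.map_tmul, LinearMap.id_apply, hH1]
      generalize Δ h = t
      induction t using TensorProduct.induction_on with
      | zero => simp
      | tmul x y =>
        simp only [LinearMap.comp_apply, LinearEquiv.coe_coe, TensorProduct.assoc_tmul,
          TensorProduct.map_tmul, LinearMap.id_apply, hqα, h0']
        generalize Φ (y ⊗ₜ q a) = w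
        induction w using TensorProduct.induction_on with
        | zero => simp
        | tmul b z => simp [hpα]
        | add x y hx hy => simp only [map_add, TensorProduct.tmul_add, hx, hy]
      | add x y hx hy => simp only [map_add, TensorProduct.add_tmul, hx, hy]
    | add x y hx hy => simp only [map_add, hx, hy]
  · intro u
    induction u using TensorProduct.induction_on with
    | zero => simp
    | tmul h a =>
      -- the composite `G`
      let G : H ⊗[k] H →ₗ[k] A ⊗[k] (H ⊗[k] H) :=
        (TensorProduct.assoc k A H H).toLinearMap
          ∘ₗ TensorProduct.map (TensorProduct.map p.toLinearMap LinearMap.id ∘ₗ Φ)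
              (LinearMap.id : H →ₗ[k] H)
          ∘ₗ (TensorProduct.assoc k H A H).symm.toLinearMap
          ∘ₗ TensorProduct.map (LinearMap.id : H →ₗ[k] H) Φ
          ∘ₗ (TensorProduct.assoc k H H A).toLinearMap
          ∘ₗ (TensorProduct.mk k (H ⊗[k] H) A).flip (αA (q a))
      have hG : ∀ y, G (Δ y) = TensorProduct.map (αA.toLinearMap ∘ₗ p.toLinearMap) Δ
          (Φ (y ⊗ₜ q a)) := by
        intro y
        have h2 := congrArg (TensorProduct.map p.toLinearMap (LinearMap.id))
          (LinearMap.congr_fun hE2 (y ⊗ₜ q a))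
        simp only [LinearMap.comp_apply, LinearEquiv.coe_coe, TensorProduct.map_tmul] at h2
        have h3 : TensorProduct.map (αA.toLinearMap ∘ₗ p.toLinearMap) Δ (Φ (y ⊗ₜ q a)) =
            TensorProduct.map p.toLinearMap (LinearMap.id)
             (TensorProduct.map αA.toLinearMap Δ (Φ (y ⊗ₜ q a))) := by
          generalize Φ (y ⊗ₜ q a) = w
          induction w using TensorProduct.induction_on with
          | zero => simp
          | tmul b z => simp [hpα]
          | add x y hx hy => simp only [map_add, hx, hy]
        rw [h3, h2]
        simp only [G, LinearMap.comp_apply, LinearEquiv.coe_coe, LinearMap.flip_apply,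
          TensorProduct.mk_apply]
        generalize ((TensorProduct.assoc k H A H).symm _) = w
        induction w using TensorProduct.induction_on with
        | zero => simp
        | tmul b z =>
          simp only [TensorProduct.map_tmul, LinearMap.comp_apply, LinearMap.id_apply]
          generalize Φ b = v
          induction v using TensorProduct.induction_on with
          | zero => simp
          | tmul b z => simp
          | add x y hx hy => simp only [map_add, TensorProduct.add_tmul, hx, hy]
        | add x y hx hy => simp only [map_add, hx, hy]
      have h3 := congrArg ((TensorProduct.assoc k H A (H ⊗[k] H)).symm)
        (congrArg (TensorProduct.map (LinearMap.id) G) (hH3 h))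
      refine Eq.trans ?_ (h3.trans ?_)
      · clear h3
        simp only [LinearMap.comp_apply, LinearEquiv.coe_coe, 
          TensorProduct.map_tmul, LinearMap.id_apply]
        generalize Δ h = t
        induction t using TensorProduct.induction_on with
        | zero => simp
        | tmul x y =>
          simp only [LinearMap.comp_apply, LinearEquiv.coe_coe, TensorProduct.assoc_tmul,
            TensorProduct.map_tmul, LinearMap.id_apply, hG]
          generalize Φ (y ⊗ₜ q a) = w
          induction w using TensorProduct.induction_on with
          | zero => simp
          | tmul b z => simp
          | add x y hx hy => simp only [map_add, TensorProduct.tmul_add, hx, hy]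
        | add x y hx hy => simp only [map_add, TensorProduct.add_tmul, hx, hy]
      · clear h3 hG
        simp only [LinearMap.comp_apply, LinearEquiv.coe_coe, 
          TensorProduct.map_tmul, LinearMap.id_apply]
        generalize Δ h = t
        induction t using TensorProduct.induction_on with
        | zero => simp
        | tmul x y =>
          simp only [LinearMap.comp_apply, LinearEquiv.coe_coe, TensorProduct.assoc_tmul,
            TensorProduct.map_tmul, LinearMap.id_apply]
          have hGy : ∀ z, G (z ⊗ₜ αH y) = (TensorProduct.assoc k A H H)
              (TensorProduct.map (TensorProduct.map p.toLinearMap LinearMap.id ∘ₗ Φ)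
              (LinearMap.id : H →ₗ[k] H) ((TensorProduct.assoc k H A H).symm
                (z ⊗ₜ TensorProduct.map αA.toLinearMap αH.toLinearMap (Φ (y ⊗ₜ q a))))) := by
            intro z
            simp [G, h0']
          clear_value G
          generalize Φ (y ⊗ₜ q a) = w at hGy ⊢
          have hGx : ∀ v : H ⊗[k] H, TensorProduct.map LinearMap.id G
              (TensorProduct.assoc k H H H (v ⊗ₜ αH y)) =
              TensorProduct.map LinearMap.id
              ((TensorProduct.assoc k A H H).toLinearMap ∘ₗ
              (TensorProduct.map (TensorProduct.map p.toLinearMap LinearMap.id ∘ₗ Φ)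
              (LinearMap.id : H →ₗ[k] H)) ∘ₗ (TensorProduct.assoc k H A H).symm.toLinearMap)
              (TensorProduct.assoc k H H (A ⊗[k] H) 
                (v ⊗ₜ TensorProduct.map αA.toLinearMap αH.toLinearMap w)) := by
            intro v
            induction v using TensorProduct.induction_on with
            | zero => simp
            | tmul v1 v2 => simp [hGy]
            | add x y hx hy => simp only [map_add, TensorProduct.add_tmul, hx, hy]
          rw [hGx]
          clear hGx hGy
          induction w using TensorProduct.induction_on with
          | zero => simp
          | tmul b z =>
            simp only [LinearMap.comp_apply, LinearEquiv.coe_coe, TensorProduct.assoc_symm_tmul,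
              TensorProduct.map_tmul, LinearMap.id_apply]
            generalize Δ x = v
            induction v using TensorProduct.induction_on with
            | zero => simp
            | tmul v1 v2 =>
              simp only [LinearMap.comp_apply, LinearEquiv.coe_coe, TensorProduct.assoc_symm_tmul,
                TensorProduct.assoc_tmul,
                TensorProduct.map_tmul, LinearMap.id_apply, hqp]
              generalize Φ (v2 ⊗ₜ αA b) = c
              induction c using TensorProduct.induction_on with
              | zero => simp
              | tmul v1 v2 => simp
              | add x y hx hy =>
                simp only [map_add, TensorProduct.add_tmul, TensorProduct.tmul_add, hx, hy]
            | add x y hx hy => simp only [map_add, TensorProduct.add_tmul, hx, hy]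
          | add x y hx hy => simp only [map_add, TensorProduct.tmul_add, hx, hy]
        | add x y hx hy => simp only [map_add, TensorProduct.add_tmul, hx, hy]
    | add x y hx hy => simp only [map_add, hx, hy]
  · intro u
    induction u using TensorProduct.induction_on with
    | zero => simp
    | tmul h a =>
      simp only [LinearMap.comp_apply, LinearEquiv.coe_coe, TensorProduct.congr_tmul,
        TensorProduct.map_tmul, LinearMap.id_apply]
      rw [← hH5 h]
      generalize Δ h = t
      induction t using TensorProduct.induction_on with
      | zero => simp
      | tmul x y =>
        simp only [LinearMap.comp_apply, LinearEquiv.coe_coe, TensorProduct.assoc_tmul,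
          TensorProduct.map_tmul, LinearMap.id_apply]
        have h3 := LinearMap.congr_fun hE3 (y ⊗ₜ q a)
        simp only [LinearMap.comp_apply, LinearEquiv.coe_coe,
          TensorProduct.map_tmul, LinearMap.id_apply, TensorProduct.lid_tmul] at h3
        have h4 : αA a = p (q a) := (hpq a).symm
        rw [TensorProduct.rid_tmul, h4, TensorProduct.smul_tmul, ← map_smul, ← h3]
        generalize Φ (y ⊗ₜ q a) = w
        induction w using TensorProduct.induction_on with
        | zero => simp
        | tmul b z => simp
        | add x y hx hy => simp only [map_add, TensorProduct.tmul_add, hx, hy]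
      | add x y hx hy => simp only [map_add, TensorProduct.add_tmul, hx, hy]
    | add x y hx hy => simp only [map_add, hx, hy]
  · intro u x
    rw [hr, hs]
    induction u using TensorProduct.induction_on with
    | zero => simp
    | tmul h a =>
      simp only [LinearMap.comp_apply, LinearEquiv.coe_coe,
        LinearMap.compr₂_apply, TensorProduct.mk_apply, TensorProduct.assoc_tmul,
        TensorProduct.lift.tmul,
        TensorProduct.map_tmul, LinearMap.id_apply, hH1]
      generalize Δ h = t
      induction t using TensorProduct.induction_on with
      | zero => simp
      | tmul y z =>
        obtain ⟨x, rfl⟩ : ∃ x', p x' = x := p.surjective x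
        have hx : q (αA.symm (p x)) = x := by
          apply αA.injective
          rw [← hqα, LinearEquiv.apply_symm_apply, hqp]
        have h1 := LinearMap.congr_fun hE1 ((z ⊗ₜ q a) ⊗ₜ x)
        simp only [LinearMap.comp_apply, LinearEquiv.coe_coe, TensorProduct.assoc_tmul,
          TensorProduct.lift.tmul, TensorProduct.map_tmul, LinearMap.id_apply] at h1
        simp only [LinearMap.comp_apply, LinearEquiv.coe_coe, TensorProduct.assoc_tmul,
          TensorProduct.map_tmul, LinearMap.id_apply, hqμ, hx, ← h1]
        generalize Φ (z ⊗ₜ q a) = w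
        induction w using TensorProduct.induction_on with
        | zero => simp
        | tmul b z =>
          simp only [LinearMap.comp_apply, LinearEquiv.coe_coe, TensorProduct.assoc_tmul,
            TensorProduct.assoc_symm_tmul,
            TensorProduct.map_tmul, LinearMap.id_apply, ← hpΦ]
          generalize Φ (z ⊗ₜ x) = w
          induction w using TensorProduct.induction_on with
          | zero => simp
          | tmul b z => simp [hpμ, hrs]
          | add x y hx hy => simp only [map_add, TensorProduct.tmul_add, hx, hy]
        | add x y hx hy =>
          simp only [map_add, TensorProduct.tmul_add, TensorProduct.add_tmul, hx, hy]
      | add x y hx hy => simp only [map_add, TensorProduct.add_tmul, hx, hy]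
    | add x y hx hy =>
      simp only [map_add, LinearMap.add_apply, TensorProduct.add_tmul, hx, hy]

/-- `H ⊗ A` with the given action and coaction is an `n`-th
Hom-entwined module. -/
theorem tensor_HA_isHomEntwinedModule
    {A H : Type*} [AddCommGroup A] [Module k A] [AddCommGroup H] [Module k H]
    (αA : A ≃ₗ[k] A) (μ : A →ₗ[k] A →ₗ[k] A) (e : A)
    (αH : H ≃ₗ[k] H) (Δ : H →ₗ[k] H ⊗[k] H) (ε : H →ₗ[k] k)
    (hA : IsHomAlgebra k αA μ e) (hH : IsHomCoalgebra k αH Δ ε)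
    (Φ : H ⊗[k] A →ₗ[k] A ⊗[k] H)
    (hΦ : IsHomEntwining k αA μ e αH Δ ε Φ) (n : ℤ) :
    IsHomEntwinedModule k αA μ e αH Δ ε Φ n
      (TensorProduct.congr αH αA)
      ((TensorProduct.mk k (H ⊗[k] A) A).compr₂
        (TensorProduct.map αH.toLinearMap
            (TensorProduct.lift μ ∘ₗ
              TensorProduct.map (LinearMap.id : A →ₗ[k] A) αA.symm.toLinearMap)
          ∘ₗ (TensorProduct.assoc k H A A).toLinearMap))
      ((TensorProduct.assoc k H A H).symm.toLinearMap
        ∘ₗ TensorProduct.map (LinearMap.id : H →ₗ[k] H)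
            (TensorProduct.map ((αA ^ (n + 1)).toLinearMap) (LinearMap.id : H →ₗ[k] H)
              ∘ₗ Φ ∘ₗ TensorProduct.map (LinearMap.id : H →ₗ[k] H)
                  ((αA ^ (-n)).toLinearMap))
        ∘ₗ (TensorProduct.assoc k H H A).toLinearMap
        ∘ₗ TensorProduct.map Δ (LinearMap.id : A →ₗ[k] A)) := by
  have hz : ∀ (i j l : ℤ), i + j = l → ∀ a, (αA ^ i) ((αA ^ j) a) = (αA ^ l) a := by
    rintro i j l rfl a
    rw [zpow_add, LinearEquiv.mul_apply]
  have hzH : ∀ (i j l : ℤ), i + j = l → ∀ a, (αH ^ i) ((αH ^ j) a) = (αH ^ l) a := by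
    rintro i j l rfl a
    rw [zpow_add, LinearEquiv.mul_apply]
  have hc : ∀ (i : ℤ) a, (αA ^ i) (αA a) = αA ((αA ^ i) a) := by
    intro i a
    have h1 := hz i 1 _ rfl a
    have h2 := hz 1 i _ (add_comm 1 i) a
    rw [zpow_one] at h1 h2
    rw [h1, h2]
  refine aux_main k αA μ e αH Δ ε hA hH Φ hΦ n _ _ _ _ rfl rfl ?_ ?_ (hc _) (hc _) ?_
    (aux_zpow_mul k αA μ hA.1 _) (aux_zpow_mul k αA μ hA.1 _) ?_
  · intro a
    rw [hz _ _ 1 (by ring), zpow_one]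
  · intro a
    rw [hz _ _ 1 (by ring), zpow_one]
  · intro a
    rw [hzH _ _ 1 (by ring), zpow_one]
  · intro h a
    exact aux_zpow_ent k αA αH Φ (fun x => LinearMap.congr_fun hΦ.1 x) (n + 1) (h ⊗ₜ a)
end
end

section
/- Let (H, α_H) be a Hom-bialgebra over a field k and n ∈ ℤ. Then the linear map Φ : H⊗H → H⊗H defined by Φ(h⊗g) = α_H^{-1}(g₁) ⊗ α_H^{-1}(h) α_H^{n}(g₂) is a Hom-entwining map, i.e. (H,H,Φ) is a Hom-entwining structure, where the first tensor factor H plays the role of the Hom-coalgebra and the second the role of the Hom-algebra. -/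
open TensorProduct BigOperators

noncomputable section

variable (k : Type*) [Field k]

theorem homB_pow_facts
    {H : Type*} [AddCommGroup H] [Module k H]
    (αH : H ≃ₗ[k] H) (μ : H →ₗ[k] H →ₗ[k] H) (e : H)
    (Δ : H →ₗ[k] H ⊗[k] H) (ε : H →ₗ[k] k)
    (hH : IsHomBialgebra k αH μ e Δ ε) (n : ℤ) :
    (∀ a b, (αH ^ n) (μ a b) = μ ((αH ^ n) a) ((αH ^ n) b)) ∧ (αH ^ n) e = e ∧
    (∀ a, ε ((αH ^ n) a) = ε a) ∧
    (∀ a, Δ ((αH ^ n) a) = TensorProduct.map (αH ^ n).toLinearMap (αH ^ n).toLinearMap (Δ a)) ∧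
    (∀ a, (αH ^ n) (αH a) = αH ((αH ^ n) a)) := by
  obtain ⟨⟨hm, -, he, -, -⟩, ⟨hΔ, hε, -, -, -⟩, -⟩ := hH
  let P : (H ≃ₗ[k] H) → Prop := fun β =>
    (∀ a b, β (μ a b) = μ (β a) (β b)) ∧ β e = e ∧ (∀ a, ε (β a) = ε a) ∧
    (∀ a, Δ (β a) = TensorProduct.map β.toLinearMap β.toLinearMap (Δ a)) ∧
    (∀ a, β (αH a) = αH (β a))
  have hα : P αH := ⟨hm, he, hε, hΔ, fun _ => rfl⟩
  have hone : P 1 := by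
    refine ⟨fun _ _ => rfl, rfl, fun _ => rfl, fun a => ?_, fun _ => rfl⟩
    have : ((1 : H ≃ₗ[k] H) : H →ₗ[k] H) = LinearMap.id := rfl
    rw [this, TensorProduct.map_id]; rfl
  have hmul : ∀ β γ, P β → P γ → P (β * γ) := by
    rintro β γ ⟨a1, a2, a3, a4, a5⟩ ⟨b1, b2, b3, b4, b5⟩
    refine ⟨?_, ?_, ?_, ?_, ?_⟩
    · intro a b; simp [a1, b1]
    · simp [a2, b2]
    · intro a; simp [a3, b3]
    · intro a
      have : ((β * γ : H ≃ₗ[k] H) : H →ₗ[k] H) = β.toLinearMap ∘ₗ γ.toLinearMap := rfl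
      rw [this, TensorProduct.map_comp]
      simp [a4, b4]
    · intro a; simp [a5, b5]
  have hinv : ∀ β, P β → P β⁻¹ := by
    rintro β ⟨a1, a2, a3, a4, a5⟩
    have key : ∀ a, β (β⁻¹ a) = a := fun a => β.apply_symm_apply a
    have key2 : ∀ a, β⁻¹ (β a) = a := fun a => β.symm_apply_apply a
    refine ⟨?_, ?_, ?_, ?_, ?_⟩
    · intro a b; apply β.injective; simp only [a1, key]
    · apply β.injective; simp only [a2, key]
    · intro a; rw [← a3, key]
    · intro a
      obtain ⟨c, rfl⟩ := β.surjective a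
      rw [key2, a4, ← LinearMap.comp_apply, ← TensorProduct.map_comp]
      have : ((β⁻¹ : H ≃ₗ[k] H) : H →ₗ[k] H) ∘ₗ β.toLinearMap = LinearMap.id := by
        ext x; exact key2 x
      rw [this, TensorProduct.map_id]; rfl
    · intro a; apply β.injective; simp only [a5, key]
  let S : Subgroup (H ≃ₗ[k] H) :=
    { carrier := {β | P β}
      mul_mem' := fun {a b} ha hb => hmul a b ha hb
      one_mem' := hone
      inv_mem' := fun {a} ha => hinv a ha }
  exact S.zpow_mem (show αH ∈ S from hα) n

/-- for a Hom-bialgebra `H` and `n ∈ ℤ`, the map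
`Φ(h ⊗ g) = α⁻¹(g₁) ⊗ α⁻¹(h) αⁿ(g₂)` is a Hom-entwining map. -/
theorem homBialgebra_canonical_homEntwining
    {H : Type*} [AddCommGroup H] [Module k H]
    (αH : H ≃ₗ[k] H) (μ : H →ₗ[k] H →ₗ[k] H) (e : H)
    (Δ : H →ₗ[k] H ⊗[k] H) (ε : H →ₗ[k] k)
    (hH : IsHomBialgebra k αH μ e Δ ε) (n : ℤ) :
    IsHomEntwining k αH μ e αH Δ ε
      (TensorProduct.map αH.symm.toLinearMap
          (TensorProduct.lift μ ∘ₗ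
            TensorProduct.map αH.symm.toLinearMap ((αH ^ n).toLinearMap))
        ∘ₗ (TensorProduct.leftComm k H H H).toLinearMap
        ∘ₗ TensorProduct.map (LinearMap.id : H →ₗ[k] H) Δ) := by
  obtain ⟨b1, b2, b3, b4, b5⟩ := homB_pow_facts k αH μ e Δ ε hH n
  obtain ⟨c1, c2, c3, c4, -⟩ := homB_pow_facts k αH μ e Δ ε hH (-1)
  have hneg : αH ^ (-1 : ℤ) = αH.symm := by rw [zpow_neg_one]; rfl
  rw [hneg] at c1 c2 c3 c4
  generalize αH ^ n = β at *
  obtain ⟨⟨hm, has, he, hl, hr⟩, ⟨hΔ, hε, hco, hlc, hrc⟩, hΔm, hΔe, hεm, hεe⟩ := hH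
  refine ⟨?_, ?_, ?_, ?_, ?_⟩
  · ext h g
    simp only [TensorProduct.AlgebraTensorModule.curry_apply, TensorProduct.curry_apply,
      LinearMap.coe_restrictScalars, LinearMap.comp_apply, TensorProduct.map_tmul,
      LinearMap.id_apply, LinearEquiv.coe_coe, hΔ]
    generalize Δ g = y
    induction y with
    | zero => simp
    | add a b iha ihb => simp only [TensorProduct.tmul_add, map_add, iha, ihb]
    | tmul p q => simp [hm, b5]
  · ext h a b
    simp only [TensorProduct.AlgebraTensorModule.curry_apply, TensorProduct.curry_apply,
      LinearMap.coe_restrictScalars, LinearMap.comp_apply, TensorProduct.map_tmul,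
      LinearMap.id_apply, LinearEquiv.coe_coe, TensorProduct.assoc_tmul,
      TensorProduct.lift.tmul, hΔm]
    generalize Δ a = x
    induction x with
    | zero => simp
    | add a b iha ihb =>
      simp only [TensorProduct.tmul_add, TensorProduct.add_tmul, map_add, iha, ihb]
    | tmul p q =>
      simp only [TensorProduct.leftComm_tmul, TensorProduct.map_tmul, LinearMap.comp_apply,
        LinearMap.id_apply, LinearEquiv.coe_coe, TensorProduct.assoc_tmul,
        TensorProduct.lift.tmul]
      generalize Δ b = y
      induction y with
      | zero => simp
      | add a b iha ihb =>
        simp only [TensorProduct.tmul_add, TensorProduct.add_tmul, map_add, iha, ihb]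
      | tmul r s =>
        simp only [TensorProduct.leftComm_tmul, TensorProduct.map_tmul, LinearMap.comp_apply,
          LinearMap.id_apply, LinearEquiv.coe_coe, TensorProduct.assoc_tmul,
          TensorProduct.assoc_symm_tmul, TensorProduct.tensorTensorTensorComm_tmul,
          TensorProduct.lift.tmul, c1, b1, hm, LinearEquiv.apply_symm_apply,
          LinearEquiv.symm_apply_apply]
        rw [← has, LinearEquiv.apply_symm_apply]
  · let F : H ⊗[k] H →ₗ[k] H := TensorProduct.lift μ ∘ₗ
            TensorProduct.map αH.symm.toLinearMap β.toLinearMap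
    let G : (H ⊗[k] H) ⊗[k] (H ⊗[k] (H ⊗[k] H)) →ₗ[k] H ⊗[k] (H ⊗[k] H) :=
      TensorProduct.map αH.symm.toLinearMap
        (TensorProduct.map F F ∘ₗ (TensorProduct.tensorTensorTensorComm k H H H H).toLinearMap)
      ∘ₗ (TensorProduct.leftComm k (H ⊗[k] H) H (H ⊗[k] H)).toLinearMap
    ext h g
    simp only [TensorProduct.AlgebraTensorModule.curry_apply, TensorProduct.curry_apply,
      LinearMap.coe_restrictScalars, LinearMap.comp_apply, TensorProduct.map_tmul,
      LinearMap.id_apply, LinearEquiv.coe_coe]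
    trans G (Δ h ⊗ₜ TensorProduct.map αH.toLinearMap Δ (Δ g))
    · generalize Δ g = y
      induction y with
      | zero => simp
      | add a b iha ihb => simp only [TensorProduct.tmul_add, map_add, iha, ihb]
      | tmul p q =>
        simp only [G, F, TensorProduct.leftComm_tmul, TensorProduct.map_tmul,
          LinearMap.comp_apply, LinearEquiv.coe_coe, TensorProduct.lift.tmul, hΔm, c4, b4,
          LinearEquiv.apply_symm_apply, LinearEquiv.symm_apply_apply]
        congr 1
        generalize Δ h = x
        generalize Δ q = z
        induction x with
        | zero => simp
        | add a b iha ihb => simp only [TensorProduct.add_tmul, map_add, iha, ihb]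
        | tmul r s =>
          induction z with
          | zero => simp
          | add a b iha ihb => simp only [TensorProduct.tmul_add, map_add, iha, ihb]
          | tmul t u => simp
    · rw [hco]
      generalize Δ h = x
      induction x with
      | zero => simp
      | add a b iha ihb => simp only [TensorProduct.add_tmul, map_add, iha, ihb]
      | tmul r s =>
        simp only [TensorProduct.assoc_tmul, TensorProduct.map_tmul, LinearMap.comp_apply,
          LinearMap.id_apply, LinearEquiv.coe_coe, hΔ]
        generalize Δ g = y
        induction y with
        | zero => simp
        | add a b iha ihb => simp only [TensorProduct.tmul_add, map_add, iha, ihb]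
        | tmul p q =>
          simp only [G, F, TensorProduct.leftComm_tmul, TensorProduct.map_tmul,
            LinearMap.comp_apply, LinearEquiv.coe_coe, TensorProduct.lift.tmul,
            LinearMap.id_apply, TensorProduct.assoc_symm_tmul,
            LinearEquiv.apply_symm_apply, LinearEquiv.symm_apply_apply]
          generalize Δ p = z
          induction z with
          | zero => simp
          | add a b iha ihb =>
            simp only [TensorProduct.tmul_add, TensorProduct.add_tmul, map_add, iha, ihb]
          | tmul t u => simp
  · ext h g
    simp only [TensorProduct.AlgebraTensorModule.curry_apply, TensorProduct.curry_apply,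
      LinearMap.coe_restrictScalars, LinearMap.comp_apply, TensorProduct.map_tmul,
      LinearMap.id_apply, LinearEquiv.coe_coe, TensorProduct.lid_tmul]
    apply αH.injective
    rw [map_smul, ← hrc g]
    generalize Δ g = y
    induction y with
    | zero => simp
    | add a b iha ihb => simp only [TensorProduct.tmul_add, map_add, smul_add, iha, ihb]
    | tmul p q => simp [hεm, b3, c3, mul_smul]
  · intro h
    simp [hΔe, b2, c2, hr]
end
end

section
/- Let (H, α_H) be a Hom-bialgebra over a field k, n ∈ ℤ, and let Φ : H⊗H → H⊗H be the Hom-entwining map Φ(h⊗g) = α_H^{-1}(g₁) ⊗ α_H^{-1}(h) α_H^{n}(g₂). Let (U,α_U) be both a right H-Hom-module and a right H-Hom-comodule. Then U is an n-th Hom-entwined module for (H,H,Φ) if and only if ρ(u·h) = u₍₀₎·h₁ ⊗ u₍₁₎ h₂ for all u ∈ U, h ∈ H (i.e. U is a Hom-Hopf module over H). -/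
open TensorProduct BigOperators

noncomputable section

variable (k : Type*) [Field k]

theorem homAlg_zpow_mul {H : Type*} [AddCommGroup H] [Module k H]
    (α : H ≃ₗ[k] H) (μ : H →ₗ[k] H →ₗ[k] H)
    (h : ∀ a b, α (μ a b) = μ (α a) (α b)) (m : ℤ) :
    ∀ a b, (α ^ m) (μ a b) = μ ((α ^ m) a) ((α ^ m) b) := by
  induction m using Int.induction_on with
  | zero => intro a b; simp
  | succ i ih =>
    intro a b
    rw [zpow_add_one]
    simp only [LinearEquiv.mul_apply, h, ih]
  | pred i ih =>
    intro a b
    have h' : ∀ a b, α⁻¹ (μ a b) = μ (α⁻¹ a) (α⁻¹ b) := by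
      intro a b
      have e1 : ∀ x, α (α⁻¹ x) = x := fun x => α.apply_symm_apply x
      apply α.injective
      rw [h, e1, e1, e1]
    rw [zpow_sub_one]
    simp only [LinearEquiv.mul_apply, h', ih]

/-- for the canonical Hom-entwining structure on a
Hom-bialgebra `H`, the `n`-th Hom-entwined modules are exactly the
Hom-Hopf modules. -/
theorem homEntwinedModule_iff_homHopfModule
    {H U : Type*} [AddCommGroup H] [Module k H] [AddCommGroup U] [Module k U]
    (αH : H ≃ₗ[k] H) (μ : H →ₗ[k] H →ₗ[k] H) (e : H)
    (Δ : H →ₗ[k] H ⊗[k] H) (ε : H →ₗ[k] k)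
    (hH : IsHomBialgebra k αH μ e Δ ε) (n : ℤ)
    (αU : U ≃ₗ[k] U) (act : U →ₗ[k] H →ₗ[k] U) (ρ : U →ₗ[k] U ⊗[k] H)
    (hMod : IsHomModule k αH μ e αU act)
    (hCom : IsHomComodule k αH Δ ε αU ρ) :
    IsHomEntwinedModule k αH μ e αH Δ ε
        (TensorProduct.map αH.symm.toLinearMap
            (TensorProduct.lift μ ∘ₗ
              TensorProduct.map αH.symm.toLinearMap ((αH ^ n).toLinearMap))
          ∘ₗ (TensorProduct.leftComm k H H H).toLinearMap
          ∘ₗ TensorProduct.map (LinearMap.id : H →ₗ[k] H) Δ) n αU act ρ ↔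
      ∀ u h, ρ (act u h)
        = TensorProduct.map (TensorProduct.lift act) (TensorProduct.lift μ)
            (TensorProduct.tensorTensorTensorComm k U H H H (ρ u ⊗ₜ[k] Δ h)) := by
  have key : ∀ (t : U ⊗[k] H) (a : H),
      TensorProduct.map
        (TensorProduct.lift act ∘ₗ
          TensorProduct.map (LinearMap.id : U →ₗ[k] U) αH.toLinearMap)
        ((αH ^ (-n)).toLinearMap)
        ((TensorProduct.assoc k U H H).symm
          (TensorProduct.map (LinearMap.id : U →ₗ[k] U)
            ((TensorProduct.map αH.symm.toLinearMap
            (TensorProduct.lift μ ∘ₗ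
              TensorProduct.map αH.symm.toLinearMap ((αH ^ n).toLinearMap))
          ∘ₗ (TensorProduct.leftComm k H H H).toLinearMap
          ∘ₗ TensorProduct.map (LinearMap.id : H →ₗ[k] H) Δ) ∘ₗ
              TensorProduct.map ((αH ^ (n + 1)).toLinearMap)
               (LinearMap.id : H →ₗ[k] H))
            (TensorProduct.assoc k U H H (t ⊗ₜ[k] a))))
      = TensorProduct.map (TensorProduct.lift act) (TensorProduct.lift μ)
            (TensorProduct.tensorTensorTensorComm k U H H H (t ⊗ₜ[k] Δ a)) := by
    intro t a
    induction t with
    | zero => simp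
    | add x y hx hy => simp only [TensorProduct.add_tmul, map_add, hx, hy]
    | tmul u x =>
      simp only [TensorProduct.assoc_tmul, TensorProduct.map_tmul, LinearMap.comp_apply,
        LinearMap.id_apply, LinearEquiv.coe_coe]
      generalize Δ a = d
      induction d with
      | zero => simp
      | add x y hx hy => simp only [TensorProduct.tmul_add, map_add, hx, hy]
      | tmul y z =>
        have e1 : (αH ^ (-n)) (αH.symm ((αH ^ (n + 1)) x)) = x := by
          have : αH ^ (-n) * (αH⁻¹ * αH ^ (n + 1)) = 1 := by group
          exact congrArg (fun f : H ≃ₗ[k] H => f x) this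
        have e2 : (αH ^ (-n)) ((αH ^ n) z) = z := by
          have : αH ^ (-n) * αH ^ n = 1 := by group
          exact congrArg (fun f : H ≃ₗ[k] H => f z) this
        simp only [TensorProduct.leftComm_tmul, TensorProduct.map_tmul, LinearMap.comp_apply,
          LinearMap.id_apply, LinearEquiv.coe_coe, TensorProduct.lift.tmul,
          TensorProduct.assoc_symm_tmul, TensorProduct.tensorTensorTensorComm_tmul,
          LinearEquiv.apply_symm_apply, homAlg_zpow_mul k αH μ hH.1.1, e1, e2]
  constructor
  · rintro ⟨-, -, h⟩ u a
    rw [h, key]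
  · intro h
    refine ⟨hMod, hCom, fun u a => ?_⟩
    rw [h, key]
end
end

section
/- Let (H, α_H) be a Hom-bialgebra over a field k, let (A, α_A) be a right H-comodule algebra (with coaction written a ↦ a₍₀₎⊗a₍₁₎), let (C, α_C) be a right H-module coalgebra (with action written c⊗h ↦ c·h), and let m ∈ ℤ. Then the linear map Φ : C⊗A → A⊗C defined by Φ(c⊗a) = α_A^{-1}(a₍₀₎) ⊗ α_C^{-1}(c)·α_H^{m}(a₍₁₎) is a Hom-entwining map, i.e. (C,A,Φ) is a Hom-entwining structure (with C playing the role of the Hom-coalgebra). -/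
open TensorProduct BigOperators

noncomputable section

variable (k : Type*) [Field k]

section Helpers

theorem doi_zpow_ind {H : Type*} [AddCommGroup H] [Module k H] (αH : H ≃ₗ[k] H)
    (P : (H ≃ₗ[k] H) → Prop) (h1 : P 1) (hm : ∀ f, P f → P (αH * f))
    (hs : ∀ f, P f → P (αH⁻¹ * f)) (m : ℤ) : P (αH ^ m) := by
  induction m using Int.induction_on with
  | zero => simpa using h1
  | succ i ih => rw [add_comm, zpow_add, zpow_one]; exact hm _ ih
  | pred i ih =>
    rw [sub_eq_add_neg, add_comm, zpow_add, zpow_neg_one]; exact hs _ ih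

end Helpers

/-- for a right `H`-comodule algebra `A` and a right `H`-module
coalgebra `C`, the map `Φ(c ⊗ a) = α_A⁻¹(a₍₀₎) ⊗ α_C⁻¹(c)·α_H^m(a₍₁₎)` is a
Hom-entwining map, i.e. `(C, A, Φ)` is a Hom-entwining structure. -/
theorem doiHopf_homEntwining
    {A C H : Type*} [AddCommGroup A] [Module k A] [AddCommGroup C] [Module k C]
    [AddCommGroup H] [Module k H]
    (αH : H ≃ₗ[k] H) (μH : H →ₗ[k] H →ₗ[k] H) (eH : H)
    (ΔH : H →ₗ[k] H ⊗[k] H) (εH : H →ₗ[k] k)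
    (hH : IsHomBialgebra k αH μH eH ΔH εH)
    (αA : A ≃ₗ[k] A) (μA : A →ₗ[k] A →ₗ[k] A) (eA : A) (ρA : A →ₗ[k] A ⊗[k] H)
    (hA : IsHomComoduleAlgebra k αH μH eH ΔH εH αA μA eA ρA)
    (αC : C ≃ₗ[k] C) (ΔC : C →ₗ[k] C ⊗[k] C) (εC : C →ₗ[k] k)
    (actC : C →ₗ[k] H →ₗ[k] C)
    (hC : IsHomModuleCoalgebra k αH μH eH ΔH εH αC ΔC εC actC) (m : ℤ) :
    IsHomEntwining k αA μA eA αC ΔC εC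
      (TensorProduct.map αA.symm.toLinearMap
          (TensorProduct.lift actC ∘ₗ
            TensorProduct.map αC.symm.toLinearMap ((αH ^ m).toLinearMap))
        ∘ₗ (TensorProduct.leftComm k C A H).toLinearMap
        ∘ₗ TensorProduct.map (LinearMap.id : C →ₗ[k] C) ρA) := by
  obtain ⟨⟨hHm, -, hHe, -, -⟩, ⟨hHΔ, hHε, -, -, -⟩, -, -, -, -⟩ := hH
  obtain ⟨⟨hAm, -, hAe, -, -⟩, ⟨hρα, hρΔ, hρε⟩, hρm, hρe⟩ := hA
  obtain ⟨⟨hCΔ, hCε, -, -, -⟩, ⟨hact, hacte, hactm⟩, hactΔ, hactε⟩ := hC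
  have hinv : ∀ x, (αH⁻¹ : H ≃ₗ[k] H) x = αH.symm x := fun _ => rfl
  -- facts about powers
  have pcomm : ∀ x, (αH ^ m) (αH x) = αH ((αH ^ m) x) := by
    intro x
    have : (αH ^ m * αH) x = (αH * αH ^ m) x := by rw [← zpow_add_one, ← zpow_one_add, add_comm]
    exact this
  have pmul : ∀ x y, (αH ^ m) (μH x y) = μH ((αH ^ m) x) ((αH ^ m) y) := by
    refine doi_zpow_ind k αH (fun f => ∀ x y, f (μH x y) = μH (f x) (f y)) ?_ ?_ ?_ m
    · intro x y; rfl
    · intro f hf x y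
      simp only [LinearEquiv.mul_apply, hf, hHm]
    · intro f hf x y
      simp only [LinearEquiv.mul_apply, hf, hinv]
      apply αH.injective
      simp [hHm]
  have pe : (αH ^ m) eH = eH := by
    refine doi_zpow_ind k αH (fun f => f eH = eH) rfl ?_ ?_ m
    · intro f hf
      simp only [LinearEquiv.mul_apply, hf, hHe]
    · intro f hf
      simp only [LinearEquiv.mul_apply, hf, hinv]
      apply αH.injective
      simp [hHe]
  have pε : ∀ x, εH ((αH ^ m) x) = εH x := by
    refine doi_zpow_ind k αH (fun f => ∀ x, εH (f x) = εH x) (fun _ => rfl) ?_ ?_ m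
    · intro f hf x
      simp only [LinearEquiv.mul_apply, hf, hHε]
    · intro f hf x
      simp only [LinearEquiv.mul_apply, hinv]
      rw [← hHε, αH.apply_symm_apply, hf]
  have sΔ : ∀ {V : Type _} [AddCommGroup V] [Module k V] (α : V ≃ₗ[k] V) (Δ : V →ₗ[k] V ⊗[k] V),
      (∀ c, Δ (α c) = TensorProduct.map α.toLinearMap α.toLinearMap (Δ c)) →
      ∀ c, Δ (α.symm c) = TensorProduct.map α.symm.toLinearMap α.symm.toLinearMap (Δ c) := by
    intro V _ _ α Δ h c
    obtain ⟨d, rfl⟩ := α.surjective c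
    rw [h, α.symm_apply_apply, ← LinearMap.comp_apply, ← TensorProduct.map_comp]
    simp
  have sΔC : ∀ c, ΔC (αC.symm c)
      = TensorProduct.map αC.symm.toLinearMap αC.symm.toLinearMap (ΔC c) := by
    intro c
    obtain ⟨d, rfl⟩ := αC.surjective c
    rw [hCΔ, αC.symm_apply_apply, ← LinearMap.comp_apply, ← TensorProduct.map_comp]
    simp
  have pΔ : ∀ x, ΔH ((αH ^ m) x)
      = TensorProduct.map (αH ^ m).toLinearMap (αH ^ m).toLinearMap (ΔH x) := by
    refine doi_zpow_ind k αH (fun f => ∀ x, ΔH (f x)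
      = TensorProduct.map f.toLinearMap f.toLinearMap (ΔH x)) ?_ ?_ ?_ m
    · intro x
      change ΔH x = TensorProduct.map LinearMap.id LinearMap.id (ΔH x)
      simp
    · intro f hf x
      rw [LinearEquiv.mul_apply, hHΔ, hf, ← LinearMap.comp_apply, ← TensorProduct.map_comp]
      rfl
    · intro f hf x
      rw [LinearEquiv.mul_apply, hinv, sΔ αH ΔH hHΔ, hf, ← LinearMap.comp_apply,
        ← TensorProduct.map_comp]
      rfl
  have sact : ∀ u h, αC.symm (actC u h) = actC (αC.symm u) (αH.symm h) := by
    intro u h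
    apply αC.injective
    simp [hact]
  have sμ : ∀ a b, αA.symm (μA a b) = μA (αA.symm a) (αA.symm b) := by
    intro u h
    apply αA.injective
    simp [hAm]
  have sε : ∀ c, εC (αC.symm c) = εC c := by
    intro c; rw [← hCε, αC.apply_symm_apply]
  set Φ := (TensorProduct.map αA.symm.toLinearMap
          (TensorProduct.lift actC ∘ₗ
            TensorProduct.map αC.symm.toLinearMap ((αH ^ m).toLinearMap))
        ∘ₗ (TensorProduct.leftComm k C A H).toLinearMap
        ∘ₗ TensorProduct.map (LinearMap.id : C →ₗ[k] C) ρA) with hΦ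
  have Φa : ∀ c a, Φ (c ⊗ₜ[k] a) = TensorProduct.map αA.symm.toLinearMap
      (actC (αC.symm c) ∘ₗ (αH ^ m).toLinearMap) (ρA a) := by
    intro c a
    simp only [hΦ, LinearMap.comp_apply, TensorProduct.map_tmul, LinearMap.id_apply]
    generalize ρA a = t
    induction t with
    | zero => simp
    | tmul x y => simp
    | add x y hx hy => simp only [TensorProduct.tmul_add, map_add, hx, hy]
  clear_value Φ
  refine ⟨?_, ?_, ?_, ?_, ?_⟩
  · ext c a
    simp only [TensorProduct.AlgebraTensorModule.curry_apply, TensorProduct.curry_apply,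
      LinearMap.restrictScalars_self, LinearMap.comp_apply, TensorProduct.map_tmul,
      LinearEquiv.coe_coe, Φa, hρα]
    generalize ρA a = t
    induction t with
    | zero => simp
    | tmul x y => simp [hact, pcomm]
    | add x y hx hy => simp only [map_add, hx, hy]
  · ext c a b
    simp only [TensorProduct.AlgebraTensorModule.curry_apply, TensorProduct.curry_apply,
      LinearMap.restrictScalars_self, LinearMap.comp_apply, TensorProduct.map_tmul,
      LinearEquiv.coe_coe, Φa, TensorProduct.assoc_tmul, TensorProduct.lift.tmul, hρm,
      LinearMap.id_apply]
    generalize ρA a = t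
    induction t with
    | zero => simp
    | add x y hx hy => simp only [map_add, TensorProduct.add_tmul, hx, hy]
    | tmul x y =>
      simp only [TensorProduct.map_tmul, TensorProduct.assoc_tmul, Φa, LinearMap.id_apply]
      generalize ρA b = s
      induction s with
      | zero => simp
      | add x y hx hy => simp only [map_add, TensorProduct.tmul_add, hx, hy]
      | tmul z w =>
        simp [hact, sμ, pmul, hactm]
  · ext c a
    simp only [TensorProduct.AlgebraTensorModule.curry_apply, TensorProduct.curry_apply,
      LinearMap.restrictScalars_self, LinearMap.comp_apply, TensorProduct.map_tmul,
      LinearEquiv.coe_coe, Φa]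
    -- left side
    have L : ∀ t : A ⊗[k] H, TensorProduct.map αA.toLinearMap ΔC
        (TensorProduct.map αA.symm.toLinearMap (actC (αC.symm c) ∘ₗ (αH ^ m).toLinearMap) t)
        = TensorProduct.map αA.symm.toLinearMap
          (TensorProduct.map (TensorProduct.lift actC) (TensorProduct.lift actC)
          ∘ₗ (TensorProduct.tensorTensorTensorComm k C C H H).toLinearMap
          ∘ₗ TensorProduct.mk k _ _ (TensorProduct.map αC.symm.toLinearMap αC.symm.toLinearMap (ΔC c))
          ∘ₗ TensorProduct.map (αH ^ m).toLinearMap (αH ^ m).toLinearMap)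
          (TensorProduct.map αA.toLinearMap ΔH t) := by
      intro t
      induction t with
      | zero => simp
      | add x y hx hy => simp only [map_add, hx, hy]
      | tmul z w => simp [hactΔ, pΔ, sΔC]
    rw [L, hρΔ]
    generalize ΔC c = d
    induction d with
    | zero => simp
    | add x y hx hy =>
      simp only [map_add, TensorProduct.add_tmul, ← hx, ← hy, LinearMap.comp_add,
        LinearMap.add_comp, TensorProduct.map_add_right, LinearMap.add_apply]
    | tmul c1 c2 =>
      simp only [TensorProduct.assoc_tmul, TensorProduct.map_tmul, Φa, LinearMap.id_apply, hρα]
      generalize ρA a = t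
      induction t with
      | zero => simp
      | add x y hx hy => simp only [map_add, TensorProduct.tmul_add, hx, hy]
      | tmul z w =>
        simp only [TensorProduct.map_tmul, LinearMap.id_apply, LinearMap.comp_apply,
          LinearEquiv.coe_coe, TensorProduct.assoc_symm_tmul, Φa, LinearEquiv.symm_apply_apply]
        generalize ρA z = s
        induction s with
        | zero => simp
        | add x y hx hy => simp only [map_add, TensorProduct.add_tmul, hx, hy]
        | tmul p q => simp
  · ext c a
    simp only [TensorProduct.AlgebraTensorModule.curry_apply, TensorProduct.curry_apply,
      LinearMap.restrictScalars_self, LinearMap.comp_apply, TensorProduct.map_tmul,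
      LinearEquiv.coe_coe, Φa, TensorProduct.lid_tmul, LinearMap.id_apply]
    have L : ∀ t : A ⊗[k] H, TensorProduct.rid k A (TensorProduct.map (LinearMap.id) εC
        (TensorProduct.map αA.symm.toLinearMap (actC (αC.symm c) ∘ₗ (αH ^ m).toLinearMap) t))
        = εC c • αA.symm (TensorProduct.rid k A (TensorProduct.map LinearMap.id εH t)) := by
      intro t
      induction t with
      | zero => simp
      | add x y hx hy => simp only [map_add, hx, hy, smul_add]
      | tmul z w => simp [hactε, pε, sε, mul_smul]
    rw [L, hρε, αA.symm_apply_apply]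
  · intro c
    rw [Φa, hρe, TensorProduct.map_tmul]
    have : αA.symm eA = eA := by rw [LinearEquiv.symm_apply_eq, hAe]
    simp [this, pe, hacte]
end
end

section
/- Let (H, α_H) be a Hom-bialgebra over a field k, let (A, α_A) be a right H-comodule algebra that is moreover a Hom-bialgebra, let (C, α_C) be a right H-module coalgebra that is moreover a Hom-bialgebra, let m ∈ ℤ, and let Φ : C⊗A → A⊗C be the map Φ(c⊗a) = α_A^{-1}(a₍₀₎) ⊗ α_C^{-1}(c)·α_H^{m}(a₍₁₎). Then the following are equivalent: (i) for all c,d ∈ C and a ∈ A one has Σ (a₁)₍₀₎ ⊗ (a₂)₍₀₎ ⊗ (c·(a₁)₍₁₎)(d·(a₂)₍₁₎) = Σ (a₍₀₎)₁ ⊗ (a₍₀₎)₂ ⊗ (cd)·α_H²(a₍₁₎) and ε_A(a)1_C = Σ ε_A(a₍₀₎) 1_C·a₍₁₎; (ii) (C,A,Φ) is a Hom-monoidal entwining datum. -/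
open TensorProduct BigOperators

noncomputable section

variable (k : Type*) [Field k]

section DHHelpers

variable {A C H : Type*}
variable [AddCommGroup A] [Module k A]
variable [AddCommGroup C] [Module k C] [AddCommGroup H] [Module k H]

theorem dh_zpow {X Y : Type*} [AddCommGroup X] [Module k X] [AddCommGroup Y] [Module k Y]
    (α : X ≃ₗ[k] X) (β : Y ≃ₗ[k] Y) (F : X → Y)
    (h : ∀ x, F (α x) = β (F x)) (n : ℤ) : ∀ x, F ((α ^ n) x) = (β ^ n) (F x) := by
  have h' : ∀ x, F (α⁻¹ x) = β⁻¹ (F x) := by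
    intro x
    apply β.injective
    rw [← h]
    change F (α (α.symm x)) = β (β.symm (F x))
    simp
  induction n using Int.induction_on with
  | zero => intro x; simp
  | succ i ih =>
    intro x
    rw [zpow_add_one, zpow_add_one, LinearEquiv.mul_apply, LinearEquiv.mul_apply, ih, h]
  | pred i ih =>
    intro x
    rw [zpow_sub_one, zpow_sub_one, LinearEquiv.mul_apply, LinearEquiv.mul_apply, ih, h']

/-- The Doi-Hopf entwining map. -/
def dhPhi (αA : A ≃ₗ[k] A) (αC : C ≃ₗ[k] C) (γ : H ≃ₗ[k] H)
    (act : C →ₗ[k] H →ₗ[k] C) (ρ : A →ₗ[k] A ⊗[k] H) : C ⊗[k] A →ₗ[k] A ⊗[k] C :=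
  TensorProduct.map αA.symm.toLinearMap
      (TensorProduct.lift act ∘ₗ TensorProduct.map αC.symm.toLinearMap γ.toLinearMap)
    ∘ₗ (TensorProduct.leftComm k C A H).toLinearMap
    ∘ₗ TensorProduct.map (LinearMap.id : C →ₗ[k] C) ρ

theorem dhPhi_tmul (αA : A ≃ₗ[k] A) (αC : C ≃ₗ[k] C) (γ : H ≃ₗ[k] H)
    (act : C →ₗ[k] H →ₗ[k] C) (ρ : A →ₗ[k] A ⊗[k] H) (c : C) (a : A) :
    dhPhi k αA αC γ act ρ (c ⊗ₜ[k] a)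
      = TensorProduct.map αA.symm.toLinearMap (act (αC.symm c) ∘ₗ γ.toLinearMap) (ρ a) := by
  simp only [dhPhi, LinearMap.comp_apply, TensorProduct.map_tmul, LinearMap.id_apply]
  generalize ρ a = x
  induction x using TensorProduct.induction_on with
  | zero => simp
  | tmul u v => simp
  | add u v hu hv => simp only [TensorProduct.tmul_add, map_add, hu, hv]

theorem dh_psi_tmul (act : C →ₗ[k] H →ₗ[k] C) (ρ : A →ₗ[k] A ⊗[k] H) (c : C) (a : A) :
    (TensorProduct.map (LinearMap.id : A →ₗ[k] A) (TensorProduct.lift act)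
              ∘ₗ (TensorProduct.leftComm k C A H).toLinearMap
              ∘ₗ TensorProduct.map (LinearMap.id : C →ₗ[k] C) ρ) (c ⊗ₜ[k] a)
      = TensorProduct.map (LinearMap.id : A →ₗ[k] A) (act c) (ρ a) := by
  simp only [LinearMap.comp_apply, TensorProduct.map_tmul, LinearMap.id_apply]
  generalize ρ a = x
  induction x using TensorProduct.induction_on with
  | zero => simp
  | tmul u v => simp
  | add u v hu hv => simp only [TensorProduct.tmul_add, map_add, hu, hv]

theorem dh_E1 (αH : H ≃ₗ[k] H) (μH : H →ₗ[k] H →ₗ[k] H)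
    (αA : A ≃ₗ[k] A) (μA : A →ₗ[k] A →ₗ[k] A) (ρA : A →ₗ[k] A ⊗[k] H)
    (αC : C ≃ₗ[k] C) (act : C →ₗ[k] H →ₗ[k] C) (γ : H ≃ₗ[k] H)
    (hαA : ∀ a b, αA (μA a b) = μA (αA a) (αA b))
    (hγμ : ∀ a b, γ (μH a b) = μH (γ a) (γ b))
    (hact : ∀ u a, αC (act u a) = act (αC u) (αH a))
    (hass : ∀ u a b, act (act u a) (αH b) = act (αC u) (μH a b))
    (hρμ : ∀ a b, ρA (μA a b) = TensorProduct.map (TensorProduct.lift μA) (TensorProduct.lift μH)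
      (TensorProduct.tensorTensorTensorComm k A H A H (ρA a ⊗ₜ[k] ρA b))) :
    (TensorProduct.map (TensorProduct.lift μA) αC.toLinearMap
      ∘ₗ (TensorProduct.assoc k A A C).symm.toLinearMap
      ∘ₗ TensorProduct.map (LinearMap.id : A →ₗ[k] A) (dhPhi k αA αC γ act ρA)
      ∘ₗ (TensorProduct.assoc k A C A).toLinearMap
      ∘ₗ TensorProduct.map (dhPhi k αA αC γ act ρA) (LinearMap.id : A →ₗ[k] A)
    = dhPhi k αA αC γ act ρA ∘ₗ TensorProduct.map αC.toLinearMap (TensorProduct.lift μA)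
        ∘ₗ (TensorProduct.assoc k C A A).toLinearMap) := by
  have hs : ∀ a b, αA.symm (μA a b) = μA (αA.symm a) (αA.symm b) := by
    intro a b; apply αA.injective; simp [hαA]
  apply TensorProduct.ext_threefold
  intro c a b
  simp only [LinearMap.comp_apply, TensorProduct.map_tmul, LinearMap.id_apply,
    LinearEquiv.coe_coe, TensorProduct.assoc_tmul, TensorProduct.lift.tmul, dhPhi_tmul, hρμ,
    LinearEquiv.symm_apply_apply]
  generalize ρA a = x
  induction x using TensorProduct.induction_on with
  | zero => simp
  | add u v hu hv => simp only [TensorProduct.add_tmul, map_add, hu, hv]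
  | tmul u v =>
    simp only [LinearMap.comp_apply, TensorProduct.map_tmul, LinearMap.id_apply,
      LinearEquiv.coe_coe, TensorProduct.assoc_tmul, dhPhi_tmul]
    generalize ρA b = y
    induction y using TensorProduct.induction_on with
    | zero => simp
    | add u v hu hv => simp only [TensorProduct.tmul_add, map_add, hu, hv]
    | tmul p q => simp [hact, hass, hs, hγμ]

theorem dh_E2 (αH : H ≃ₗ[k] H) (ΔH : H →ₗ[k] H ⊗[k] H)
    (αA : A ≃ₗ[k] A) (ρA : A →ₗ[k] A ⊗[k] H)
    (αC : C ≃ₗ[k] C) (ΔC : C →ₗ[k] C ⊗[k] C) (act : C →ₗ[k] H →ₗ[k] C) (γ : H ≃ₗ[k] H)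
    (hγα : ∀ a, γ (αH a) = αH (γ a))
    (hγΔ : ∀ a, ΔH (γ a) = TensorProduct.map γ.toLinearMap γ.toLinearMap (ΔH a))
    (hαΔ : ∀ c, ΔC (αC c) = TensorProduct.map αC.toLinearMap αC.toLinearMap (ΔC c))
    (hρα : ∀ u, ρA (αA u) = TensorProduct.map αA.toLinearMap αH.toLinearMap (ρA u))
    (hρρ : ∀ u, TensorProduct.map αA.toLinearMap ΔH (ρA u)
      = TensorProduct.assoc k A H H (TensorProduct.map ρA αH.toLinearMap (ρA u)))
    (hΔact : ∀ c h, ΔC (act c h)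
      = TensorProduct.map (TensorProduct.lift act) (TensorProduct.lift act)
      (TensorProduct.tensorTensorTensorComm k C C H H (ΔC c ⊗ₜ[k] ΔH h))) :
    (TensorProduct.map αA.toLinearMap ΔC ∘ₗ dhPhi k αA αC γ act ρA
     = (TensorProduct.assoc k A C C).toLinearMap
       ∘ₗ TensorProduct.map (dhPhi k αA αC γ act ρA) (LinearMap.id : C →ₗ[k] C)
       ∘ₗ (TensorProduct.assoc k C A C).symm.toLinearMap
       ∘ₗ TensorProduct.map (LinearMap.id : C →ₗ[k] C) (dhPhi k αA αC γ act ρA)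
       ∘ₗ (TensorProduct.assoc k C C A).toLinearMap
       ∘ₗ TensorProduct.map ΔC αA.toLinearMap) := by
  have hs : ∀ c, ΔC (αC.symm c)
      = TensorProduct.map αC.symm.toLinearMap αC.symm.toLinearMap (ΔC c) := by
    intro c
    obtain ⟨d, rfl⟩ := αC.surjective c
    rw [hαΔ, LinearEquiv.symm_apply_apply]
    generalize ΔC d = x
    induction x using TensorProduct.induction_on with
    | zero => simp
    | tmul u v => simp
    | add u v hu hv => rw [map_add, map_add, ← hu, ← hv]
  apply TensorProduct.ext'
  intro c a
  simp only [LinearMap.comp_apply, TensorProduct.map_tmul, LinearMap.id_apply,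
    LinearEquiv.coe_coe]
  -- the common value
  have key : ∀ (x : C ⊗[k] C) (z : A ⊗[k] H),
      (TensorProduct.assoc k A C C)
        (TensorProduct.map (dhPhi k αA αC γ act ρA) (LinearMap.id : C →ₗ[k] C)
        ((TensorProduct.assoc k C A C).symm
        (TensorProduct.map (LinearMap.id : C →ₗ[k] C)
          (TensorProduct.map αA.symm.toLinearMap (LinearMap.id : C →ₗ[k] C) ∘ₗ
            TensorProduct.map αA.toLinearMap (LinearMap.id : C →ₗ[k] C) ∘ₗ
            TensorProduct.map (LinearMap.id : A →ₗ[k] A)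
              (TensorProduct.lift act ∘ₗ TensorProduct.map αC.symm.toLinearMap γ.toLinearMap)
            ∘ₗ (TensorProduct.leftComm k C A H).toLinearMap)
        ((TensorProduct.assoc k C C (A ⊗[k] H)) (x ⊗ₜ[k]
          TensorProduct.map (LinearMap.id : A →ₗ[k] A) αH.toLinearMap z)))))
      = TensorProduct.map αA.symm.toLinearMap
          (TensorProduct.map (TensorProduct.lift act) (TensorProduct.lift act)
           ∘ₗ (TensorProduct.tensorTensorTensorComm k C C H H).toLinearMap
           ∘ₗ TensorProduct.mk k (C ⊗[k] C) (H ⊗[k] H)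
              (TensorProduct.map αC.symm.toLinearMap αC.symm.toLinearMap x)
           ∘ₗ TensorProduct.map γ.toLinearMap γ.toLinearMap)
          (TensorProduct.assoc k A H H (TensorProduct.map ρA αH.toLinearMap z)) := by
    intro x z
    induction x using TensorProduct.induction_on with
    | zero => simp
    | add u v hu hv =>
      simp only [TensorProduct.add_tmul, map_add, hu, hv, LinearMap.comp_add, LinearMap.add_comp,
        TensorProduct.map_add_right, LinearMap.add_apply]
    | tmul c d =>
      induction z using TensorProduct.induction_on with
      | zero => simp
      | add u v hu hv => simp only [TensorProduct.tmul_add, map_add, hu, hv]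
      | tmul p q =>
        simp only [LinearMap.comp_apply, TensorProduct.map_tmul, LinearMap.id_apply,
          LinearEquiv.coe_coe, TensorProduct.assoc_tmul, TensorProduct.leftComm_tmul,
          LinearEquiv.symm_apply_apply, TensorProduct.assoc_symm_tmul, dhPhi_tmul]
        generalize ρA p = y
        induction y using TensorProduct.induction_on with
        | zero => simp
        | add u v hu hv => simp only [TensorProduct.add_tmul, map_add, hu, hv]
        | tmul r s => simp
  have lhs : TensorProduct.map αA.toLinearMap ΔC (dhPhi k αA αC γ act ρA (c ⊗ₜ[k] a))
      = TensorProduct.map αA.symm.toLinearMap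
          (TensorProduct.map (TensorProduct.lift act) (TensorProduct.lift act)
           ∘ₗ (TensorProduct.tensorTensorTensorComm k C C H H).toLinearMap
           ∘ₗ TensorProduct.mk k (C ⊗[k] C) (H ⊗[k] H)
              (TensorProduct.map αC.symm.toLinearMap αC.symm.toLinearMap (ΔC c))
           ∘ₗ TensorProduct.map γ.toLinearMap γ.toLinearMap)
          (TensorProduct.map αA.toLinearMap ΔH (ρA a)) := by
    rw [dhPhi_tmul]
    generalize ρA a = y
    induction y using TensorProduct.induction_on with
    | zero => simp
    | add u v hu hv => simp only [map_add, hu, hv]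
    | tmul r s => simp [hΔact, hs, hγΔ]
  rw [lhs, hρρ, ← key]
  congr 3
  generalize ΔC c = x
  induction x using TensorProduct.induction_on with
  | zero => simp
  | add u v hu hv => simp only [TensorProduct.add_tmul, map_add, hu, hv]
  | tmul c d =>
    simp only [LinearMap.comp_apply, TensorProduct.map_tmul, LinearMap.id_apply,
      LinearEquiv.coe_coe, TensorProduct.assoc_tmul, dhPhi_tmul, hρα]
    congr 1
    generalize ρA a = y
    induction y using TensorProduct.induction_on with
    | zero => simp
    | add u v hu hv => simp only [TensorProduct.tmul_add, map_add, hu, hv]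
    | tmul r s => simp

theorem dh_entw (αH : H ≃ₗ[k] H) (μH : H →ₗ[k] H →ₗ[k] H) (eH : H)
    (ΔH : H →ₗ[k] H ⊗[k] H) (εH : H →ₗ[k] k)
    (αA : A ≃ₗ[k] A) (μA : A →ₗ[k] A →ₗ[k] A) (eA : A)
    (ρA : A →ₗ[k] A ⊗[k] H)
    (hA : IsHomComoduleAlgebra k αH μH eH ΔH εH αA μA eA ρA)
    (αC : C ≃ₗ[k] C)
    (ΔC : C →ₗ[k] C ⊗[k] C) (εC : C →ₗ[k] k) (actC : C →ₗ[k] H →ₗ[k] C)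
    (hC : IsHomModuleCoalgebra k αH μH eH ΔH εH αC ΔC εC actC) (γ : H ≃ₗ[k] H)
    (hγα : ∀ a, γ (αH a) = αH (γ a))
    (hγμ : ∀ a b, γ (μH a b) = μH (γ a) (γ b))
    (hγΔ : ∀ a, ΔH (γ a) = TensorProduct.map γ.toLinearMap γ.toLinearMap (ΔH a))
    (hγe : γ eH = eH) (hγε : ∀ h, εH (γ h) = εH h) :
    IsHomEntwining k αA μA eA αC ΔC εC (dhPhi k αA αC γ actC ρA) := by
  obtain ⟨⟨hAμ, hAass, hAe, hAl, hAr⟩, ⟨hρα, hρρ, hρε⟩, hρμ, hρe⟩ := hA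
  obtain ⟨⟨hCΔ, hCε, -, -, -⟩, ⟨hact, hacte, hass⟩, hΔact, hεact⟩ := hC
  refine ⟨?_, dh_E1 k αH μH αA μA ρA αC actC γ hAμ hγμ hact hass hρμ,
    dh_E2 k αH ΔH αA ρA αC ΔC actC γ hγα hγΔ hCΔ hρα hρρ hΔact, ?_, ?_⟩
  · apply TensorProduct.ext'
    intro c a
    simp only [LinearMap.comp_apply, TensorProduct.map_tmul, LinearEquiv.coe_coe, dhPhi_tmul, hρα]
    generalize ρA a = y
    induction y using TensorProduct.induction_on with
    | zero => simp
    | add u v hu hv => simp only [map_add, hu, hv]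
    | tmul r s => simp [hact, hγα]
  · apply TensorProduct.ext'
    intro c a
    apply αA.injective
    simp only [LinearMap.comp_apply, TensorProduct.map_tmul, LinearEquiv.coe_coe, dhPhi_tmul,
      TensorProduct.lid_tmul, LinearMap.id_apply, map_smul, ← hρε a]
    have hs : ∀ c, εC (αC.symm c) = εC c := fun c => by
      rw [← hCε, LinearEquiv.apply_symm_apply]
    generalize ρA a = y
    induction y using TensorProduct.induction_on with
    | zero => simp
    | add u v hu hv => simp only [map_add, hu, hv, smul_add]
    | tmul r s => simp [hεact, hs, hγε, mul_smul]
  · intro c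
    have : αA.symm eA = eA := by rw [LinearEquiv.symm_apply_eq, hAe]
    simp [dhPhi_tmul, hρe, hγe, hacte, this]

theorem dh_E5 (αH : H ≃ₗ[k] H)
    (αA : A ≃ₗ[k] A) (ΔA : A →ₗ[k] A ⊗[k] A) (ρA : A →ₗ[k] A ⊗[k] H)
    (αC : C ≃ₗ[k] C) (μC : C →ₗ[k] C →ₗ[k] C)
    (actC : C →ₗ[k] H →ₗ[k] C) (γ : H ≃ₗ[k] H) (δ : A ≃ₗ[k] A)
    (hγα : ∀ a, γ (αH a) = αH (γ a))
    (hδρ : ∀ a, ρA (δ a) = TensorProduct.map δ.toLinearMap γ.toLinearMap (ρA a))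
    (hδΔ : ∀ a, ΔA (δ a) = TensorProduct.map δ.toLinearMap δ.toLinearMap (ΔA a))
    (hαΔ : ∀ a, ΔA (αA a) = TensorProduct.map αA.toLinearMap αA.toLinearMap (ΔA a))
    (hαμ : ∀ a b, αC (μC a b) = μC (αC a) (αC b))
    (hact : ∀ u a, αC (actC u a) = actC (αC u) (αH a)) :
    (TensorProduct.map (LinearMap.id : A ⊗[k] A →ₗ[k] A ⊗[k] A)
          (TensorProduct.lift μC)
        ∘ₗ (TensorProduct.tensorTensorTensorComm k A C A C).toLinearMap
        ∘ₗ TensorProduct.map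
            (TensorProduct.map (LinearMap.id : A →ₗ[k] A) (TensorProduct.lift actC)
              ∘ₗ (TensorProduct.leftComm k C A H).toLinearMap
              ∘ₗ TensorProduct.map (LinearMap.id : C →ₗ[k] C) ρA)
            (TensorProduct.map (LinearMap.id : A →ₗ[k] A) (TensorProduct.lift actC)
              ∘ₗ (TensorProduct.leftComm k C A H).toLinearMap
              ∘ₗ TensorProduct.map (LinearMap.id : C →ₗ[k] C) ρA)
        ∘ₗ (TensorProduct.tensorTensorTensorComm k C C A A).toLinearMap
        ∘ₗ TensorProduct.map (LinearMap.id : C ⊗[k] C →ₗ[k] C ⊗[k] C) ΔA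
      = TensorProduct.map ΔA
            (TensorProduct.lift actC ∘ₗ
              TensorProduct.map (LinearMap.id : C →ₗ[k] C)
                (αH.toLinearMap ∘ₗ αH.toLinearMap))
          ∘ₗ (TensorProduct.leftComm k C A H).toLinearMap
          ∘ₗ TensorProduct.map (TensorProduct.lift μC) ρA) ↔
    (TensorProduct.map (LinearMap.id : A ⊗[k] A →ₗ[k] A ⊗[k] A) (TensorProduct.lift μC)
      ∘ₗ (TensorProduct.tensorTensorTensorComm k A C A C).toLinearMap
      ∘ₗ TensorProduct.map (dhPhi k αA αC γ actC ρA) (dhPhi k αA αC γ actC ρA)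
      ∘ₗ (TensorProduct.tensorTensorTensorComm k C C A A).toLinearMap
      ∘ₗ TensorProduct.map
           (TensorProduct.map (αC.toLinearMap ∘ₗ αC.toLinearMap)
             (αC.toLinearMap ∘ₗ αC.toLinearMap)) ΔA
    = TensorProduct.map ΔA (αC.toLinearMap ∘ₗ αC.toLinearMap)
        ∘ₗ dhPhi k αA αC γ actC ρA
        ∘ₗ TensorProduct.map (TensorProduct.lift μC) (LinearMap.id : A →ₗ[k] A)) := by
  set ψ := (TensorProduct.map (LinearMap.id : A →ₗ[k] A) (TensorProduct.lift actC)
              ∘ₗ (TensorProduct.leftComm k C A H).toLinearMap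
              ∘ₗ TensorProduct.map (LinearMap.id : C →ₗ[k] C) ρA) with hψ
  have hψt : ∀ c a, ψ (c ⊗ₜ[k] a) = TensorProduct.map (LinearMap.id : A →ₗ[k] A) (actC c) (ρA a) :=
    fun c a => dh_psi_tmul k actC ρA c a
  clear_value ψ
  set L1 := TensorProduct.map (LinearMap.id : A ⊗[k] A →ₗ[k] A ⊗[k] A)
          (TensorProduct.lift μC)
        ∘ₗ (TensorProduct.tensorTensorTensorComm k A C A C).toLinearMap
        ∘ₗ TensorProduct.map ψ ψ
        ∘ₗ (TensorProduct.tensorTensorTensorComm k C C A A).toLinearMap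
        ∘ₗ TensorProduct.map (LinearMap.id : C ⊗[k] C →ₗ[k] C ⊗[k] C) ΔA with hL1
  set R1 := TensorProduct.map ΔA
            (TensorProduct.lift actC ∘ₗ
              TensorProduct.map (LinearMap.id : C →ₗ[k] C)
                (αH.toLinearMap ∘ₗ αH.toLinearMap))
          ∘ₗ (TensorProduct.leftComm k C A H).toLinearMap
          ∘ₗ TensorProduct.map (TensorProduct.lift μC) ρA with hR1
  set L2 := TensorProduct.map (LinearMap.id : A ⊗[k] A →ₗ[k] A ⊗[k] A) (TensorProduct.lift μC)
      ∘ₗ (TensorProduct.tensorTensorTensorComm k A C A C).toLinearMap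
      ∘ₗ TensorProduct.map (dhPhi k αA αC γ actC ρA) (dhPhi k αA αC γ actC ρA)
      ∘ₗ (TensorProduct.tensorTensorTensorComm k C C A A).toLinearMap
      ∘ₗ TensorProduct.map
           (TensorProduct.map (αC.toLinearMap ∘ₗ αC.toLinearMap)
             (αC.toLinearMap ∘ₗ αC.toLinearMap)) ΔA with hL2
  set R2 := TensorProduct.map ΔA (αC.toLinearMap ∘ₗ αC.toLinearMap)
        ∘ₗ dhPhi k αA αC γ actC ρA
        ∘ₗ TensorProduct.map (TensorProduct.lift μC) (LinearMap.id : A →ₗ[k] A) with hR2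
  -- the twist on the source and on the target
  let S : (C ⊗[k] C) ⊗[k] A ≃ₗ[k] (C ⊗[k] C) ⊗[k] A :=
    TensorProduct.congr (TensorProduct.congr αC αC) δ
  let T : (A ⊗[k] A) ⊗[k] C ≃ₗ[k] (A ⊗[k] A) ⊗[k] C :=
    TensorProduct.congr (TensorProduct.congr (αA.trans δ) (αA.trans δ)) (LinearEquiv.refl k C)
  have hLL : L1 ∘ₗ S.toLinearMap = T.toLinearMap ∘ₗ L2 := by
    apply TensorProduct.ext_threefold
    intro c d a
    simp only [hL1, hL2, S, T, LinearMap.comp_apply, TensorProduct.map_tmul, LinearMap.id_apply,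
      LinearEquiv.coe_coe, TensorProduct.congr_tmul, hδΔ]
    generalize ΔA a = x
    induction x using TensorProduct.induction_on with
    | zero => simp
    | add u v hu hv => simp only [TensorProduct.tmul_add, map_add, hu, hv]
    | tmul p q =>
      simp only [TensorProduct.map_tmul, LinearEquiv.coe_coe,
        TensorProduct.tensorTensorTensorComm_tmul, hψt, dhPhi_tmul, hδρ,
        LinearEquiv.symm_apply_apply]
      generalize ρA p = y
      generalize ρA q = z
      induction y using TensorProduct.induction_on with
      | zero => simp
      | add u v hu hv => simp only [TensorProduct.add_tmul, map_add, hu, hv]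
      | tmul p q =>
        induction z using TensorProduct.induction_on with
        | zero => simp
        | add u v hu hv => simp only [TensorProduct.tmul_add, map_add, hu, hv]
        | tmul r s => simp
  have hRR : R1 ∘ₗ S.toLinearMap = T.toLinearMap ∘ₗ R2 := by
    apply TensorProduct.ext_threefold
    intro c d a
    simp only [hR1, hR2, S, T, LinearMap.comp_apply, TensorProduct.map_tmul, LinearMap.id_apply,
      LinearEquiv.coe_coe, TensorProduct.congr_tmul, TensorProduct.lift.tmul, dhPhi_tmul, hδρ]
    generalize ρA a = y
    induction y using TensorProduct.induction_on with
    | zero => simp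
    | add u v hu hv => simp only [TensorProduct.tmul_add, map_add, hu, hv]
    | tmul p q =>
      obtain ⟨p, rfl⟩ := αA.surjective p
      simp only [TensorProduct.map_tmul, LinearEquiv.coe_coe, TensorProduct.leftComm_tmul,
        LinearMap.comp_apply, LinearMap.id_apply, TensorProduct.lift.tmul,
        LinearEquiv.symm_apply_apply, TensorProduct.congr_tmul, hδΔ, hαΔ, hact,
        LinearEquiv.apply_symm_apply, hαμ, LinearEquiv.refl_apply]
      congr 1
      generalize ΔA p = z
      induction z using TensorProduct.induction_on with
      | zero => simp
      | add u v hu hv => simp only [map_add, hu, hv]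
      | tmul r s => simp
  constructor
  · intro h
    rw [h, hRR] at hLL
    ext1
    refine LinearMap.ext fun x => LinearMap.ext fun y => T.injective ?_
    exact (LinearMap.congr_fun hLL (x ⊗ₜ y)).symm
  · intro h
    rw [h, ← hRR] at hLL
    refine LinearMap.ext fun x => ?_
    obtain ⟨y, rfl⟩ := S.surjective x
    exact LinearMap.congr_fun hLL y

theorem dh_E6
    (αA : A ≃ₗ[k] A) (εA : A →ₗ[k] k) (ρA : A →ₗ[k] A ⊗[k] H)
    (αC : C ≃ₗ[k] C) (eC : C)
    (actC : C →ₗ[k] H →ₗ[k] C) (γ : H ≃ₗ[k] H) (δ : A ≃ₗ[k] A)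
    (hδρ : ∀ a, ρA (δ a) = TensorProduct.map δ.toLinearMap γ.toLinearMap (ρA a))
    (hαε : ∀ a, εA (αA a) = εA a) (hδε : ∀ a, εA (δ a) = εA a) (hαe : αC eC = eC) :
    (∀ a, εA a • eC
        = actC eC ((TensorProduct.lid k H)
            (TensorProduct.map εA (LinearMap.id : H →ₗ[k] H) (ρA a)))) ↔
    (∀ a, TensorProduct.lid k C
      (TensorProduct.map εA (LinearMap.id : C →ₗ[k] C)
        (dhPhi k αA αC γ actC ρA (eC ⊗ₜ[k] a))) = εA a • eC) := by
  have hs : ∀ a, εA (αA.symm a) = εA a := fun c => by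
    rw [← hαε, LinearEquiv.apply_symm_apply]
  have he : αC.symm eC = eC := by rw [LinearEquiv.symm_apply_eq, hαe]
  have key : ∀ a, TensorProduct.lid k C
      (TensorProduct.map εA (LinearMap.id : C →ₗ[k] C)
        (dhPhi k αA αC γ actC ρA (eC ⊗ₜ[k] a))) = actC eC ((TensorProduct.lid k H)
            (TensorProduct.map εA (LinearMap.id : H →ₗ[k] H) (ρA (δ a)))) := by
    intro a
    rw [dhPhi_tmul, hδρ, he]
    generalize ρA a = y
    induction y using TensorProduct.induction_on with
    | zero => simp
    | add u v hu hv => simp only [map_add, hu, hv]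
    | tmul r s => simp [hs, hδε]
  constructor
  · intro h a
    rw [key, ← h, hδε]
  · intro h a
    obtain ⟨b, rfl⟩ := δ.surjective a
    rw [← key, h, hδε]

end DHHelpers

/-- with `A` a right `H`-comodule algebra which is a
Hom-bialgebra and `C` a right `H`-module coalgebra which is a Hom-bialgebra,
the compatibility conditions (i) hold iff `(C, A, Φ)` is a Hom-monoidal
entwining datum. -/
theorem doiHopf_monoidal_iff
    {A C H : Type*} [AddCommGroup A] [Module k A] [AddCommGroup C] [Module k C]
    [AddCommGroup H] [Module k H]
    (αH : H ≃ₗ[k] H) (μH : H →ₗ[k] H →ₗ[k] H) (eH : H)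
    (ΔH : H →ₗ[k] H ⊗[k] H) (εH : H →ₗ[k] k)
    (hH : IsHomBialgebra k αH μH eH ΔH εH)
    (αA : A ≃ₗ[k] A) (μA : A →ₗ[k] A →ₗ[k] A) (eA : A)
    (ΔA : A →ₗ[k] A ⊗[k] A) (εA : A →ₗ[k] k) (ρA : A →ₗ[k] A ⊗[k] H)
    (hA : IsHomComoduleAlgebra k αH μH eH ΔH εH αA μA eA ρA)
    (hAbi : IsHomBialgebra k αA μA eA ΔA εA)
    (αC : C ≃ₗ[k] C) (μC : C →ₗ[k] C →ₗ[k] C) (eC : C)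
    (ΔC : C →ₗ[k] C ⊗[k] C) (εC : C →ₗ[k] k) (actC : C →ₗ[k] H →ₗ[k] C)
    (hC : IsHomModuleCoalgebra k αH μH eH ΔH εH αC ΔC εC actC)
    (hCbi : IsHomBialgebra k αC μC eC ΔC εC) (m : ℤ) :
    ((TensorProduct.map (LinearMap.id : A ⊗[k] A →ₗ[k] A ⊗[k] A)
          (TensorProduct.lift μC)
        ∘ₗ (TensorProduct.tensorTensorTensorComm k A C A C).toLinearMap
        ∘ₗ TensorProduct.map
            (TensorProduct.map (LinearMap.id : A →ₗ[k] A) (TensorProduct.lift actC)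
              ∘ₗ (TensorProduct.leftComm k C A H).toLinearMap
              ∘ₗ TensorProduct.map (LinearMap.id : C →ₗ[k] C) ρA)
            (TensorProduct.map (LinearMap.id : A →ₗ[k] A) (TensorProduct.lift actC)
              ∘ₗ (TensorProduct.leftComm k C A H).toLinearMap
              ∘ₗ TensorProduct.map (LinearMap.id : C →ₗ[k] C) ρA)
        ∘ₗ (TensorProduct.tensorTensorTensorComm k C C A A).toLinearMap
        ∘ₗ TensorProduct.map (LinearMap.id : C ⊗[k] C →ₗ[k] C ⊗[k] C) ΔA
      = TensorProduct.map ΔA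
            (TensorProduct.lift actC ∘ₗ
              TensorProduct.map (LinearMap.id : C →ₗ[k] C)
                (αH.toLinearMap ∘ₗ αH.toLinearMap))
          ∘ₗ (TensorProduct.leftComm k C A H).toLinearMap
          ∘ₗ TensorProduct.map (TensorProduct.lift μC) ρA) ∧
      (∀ a, εA a • eC
        = actC eC ((TensorProduct.lid k H)
            (TensorProduct.map εA (LinearMap.id : H →ₗ[k] H) (ρA a))))) ↔
    IsHomMonoidalEntwining k αA μA eA ΔA εA αC μC eC ΔC εC
      (TensorProduct.map αA.symm.toLinearMap
          (TensorProduct.lift actC ∘ₗ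
            TensorProduct.map αC.symm.toLinearMap ((αH ^ m).toLinearMap))
        ∘ₗ (TensorProduct.leftComm k C A H).toLinearMap
        ∘ₗ TensorProduct.map (LinearMap.id : C →ₗ[k] C) ρA) := by
  have hγα : ∀ a, (αH ^ m) (αH a) = αH ((αH ^ m) a) := fun a =>
    (dh_zpow k αH αH αH (fun _ => rfl) m a).symm
  have hγμ : ∀ a b, (αH ^ m) (μH a b) = μH ((αH ^ m) a) ((αH ^ m) b) := by
    intro a b
    have := dh_zpow k (TensorProduct.congr αH αH) αH (TensorProduct.lift μH) (fun x => by
      induction x using TensorProduct.induction_on with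
      | zero => simp
      | add u v hu hv => simp only [map_add, hu, hv]
      | tmul r s => simp [hH.1.1]) m (a ⊗ₜ b)
    rw [TensorProduct.congr_zpow] at this
    simpa using this.symm
  have hγΔ : ∀ a, ΔH ((αH ^ m) a)
      = TensorProduct.map (αH ^ m).toLinearMap (αH ^ m).toLinearMap (ΔH a) := by
    intro a
    have := dh_zpow k αH (TensorProduct.congr αH αH) ΔH (fun x => hH.2.1.1 x) m a
    rw [TensorProduct.congr_zpow] at this
    exact this
  have hγe : (αH ^ m) eH = eH := by
    have := dh_zpow k (1 : H ≃ₗ[k] H) αH (fun _ => eH) (fun x => hH.1.2.2.1.symm) m 0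
    exact this.symm
  have hγε : ∀ h, εH ((αH ^ m) h) = εH h := by
    intro a
    have := dh_zpow k αH (1 : k ≃ₗ[k] k) εH (fun x => hH.2.1.2.1 x) m a
    rw [one_zpow] at this
    exact this
  have hδρ : ∀ a, ρA ((αA ^ m) a)
      = TensorProduct.map (αA ^ m).toLinearMap (αH ^ m).toLinearMap (ρA a) := by
    intro a
    have := dh_zpow k αA (TensorProduct.congr αA αH) ρA (fun x => hA.2.1.1 x) m a
    rw [TensorProduct.congr_zpow] at this
    exact this
  have hδΔ : ∀ a, ΔA ((αA ^ m) a)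
      = TensorProduct.map (αA ^ m).toLinearMap (αA ^ m).toLinearMap (ΔA a) := by
    intro a
    have := dh_zpow k αA (TensorProduct.congr αA αA) ΔA (fun x => hAbi.2.1.1 x) m a
    rw [TensorProduct.congr_zpow] at this
    exact this
  have hδε : ∀ h, εA ((αA ^ m) h) = εA h := by
    intro a
    have := dh_zpow k αA (1 : k ≃ₗ[k] k) εA (fun x => hAbi.2.1.2.1 x) m a
    rw [one_zpow] at this
    exact this
  have h0 := dh_entw k αH μH eH ΔH εH αA μA eA ρA hA αC ΔC εC actC hC (αH ^ m)
    hγα hγμ hγΔ hγe hγε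
  have h5 := dh_E5 k αH αA ΔA ρA αC μC actC (αH ^ m) (αA ^ m) hγα hδρ hδΔ hAbi.2.1.1
    hCbi.1.1 hC.2.1.1
  have h6 := dh_E6 k αA εA ρA αC eC actC (αH ^ m) (αA ^ m) hδρ hAbi.2.1.2.1 hδε hCbi.1.2.2.1
  rw [h5, h6]
  exact ⟨fun h => ⟨h0, h.1, h.2⟩, fun h => h.2⟩
end
end
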